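/- There exists a C^∞ diffeomorphism f of the 3-dimensional torus 𝕋³ = (ℝ/ℤ)³ (with its standard smooth manifold structure and normalized Haar measure Leb) such that the set of points x ∈ 𝕋³ satisfying both of the following has full Leb-measure: (1) the forward orbit {fⁿ(x) : n ≥ 0} is dense in 𝕋³; (2) the sequence of empirical measures e_n(x) := (1/n)·∑_{i=0}^{n-1} δ_{f^i(x)} does not converge in the weak topology on Borel probability measures of 𝕋³. In particular, f is transitive and admits no physical measure. -/

import Mathlib

open MeasureTheory Filter Topology
open scoped ENNReal NNReal Manifold

noncomputable section

instance : MeasurableSpace Circle := borel Circle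
instance : BorelSpace Circle := ⟨rfl⟩

/-- The 3-torus, realized as the product of three circles. -/
abbrev T3 : Type := Circle × Circle × Circle

/-- The model with corners for the 3-torus as a product of three 1-dimensional manifolds. -/
abbrev modelT3 := (𝓡 1).prod ((𝓡 1).prod (𝓡 1))

/-- The normalized Haar (Lebesgue) probability measure on the 3-torus. -/
abbrev LebT3 : Measure T3 :=
  Measure.haarMeasure (⊤ : TopologicalSpace.PositiveCompacts T3)

/-- The `n`-th empirical measure of `x` under `f`, as a `Measure`. -/
def empMeasT3 (f : T3 → T3) (x : T3) (n : ℕ) : Measure T3 :=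
  ((n : ℝ≥0∞))⁻¹ • ∑ i ∈ Finset.range n, Measure.dirac (f^[i] x)

lemma empMeasT3_isProbabilityMeasure (f : T3 → T3) (x : T3) {n : ℕ} (hn : n ≠ 0) :
    IsProbabilityMeasure (empMeasT3 f x n) := by
  constructor
  simp only [empMeasT3, Measure.smul_apply, smul_eq_mul,
    Measure.finset_sum_apply, Measure.dirac_apply_of_mem (Set.mem_univ _),
    Finset.sum_const, Finset.card_range, nsmul_eq_mul, mul_one]
  exact ENNReal.inv_mul_cancel (by exact_mod_cast hn) (ENNReal.natCast_ne_top n)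

/-- The `n`-th empirical measure of `x` under `f` as a Borel probability measure
(junk value `δ_x` for `n = 0`). -/
def empT3 (f : T3 → T3) (x : T3) (n : ℕ) : ProbabilityMeasure T3 :=
  if hn : n = 0 then ⟨Measure.dirac x, inferInstance⟩
  else ⟨empMeasT3 f x n, empMeasT3_isProbabilityMeasure f x hn⟩


/-- Metric equidistribution lemma. -/
lemma metric_lemma0 (lam : ℕ → ℝ) (hl : Tendsto lam atTop atTop) {a b : ℝ} (hab : a < b) :
    ∀ᵐ x : ℝ, ∃ j, ∃ m : ℤ, lam j * x - m ∈ Set.Ioo a b := by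
  set S : Set ℝ := {x | ¬ ∃ j, ∃ m : ℤ, lam j * x - m ∈ Set.Ioo a b} with hS
  have key := IsUnifLocDoublingMeasure.ae_tendsto_measure_inter_div (volume : Measure ℝ) S
    (4 * (1 + |a| + |b|) / (b - a))
  have hSm : MeasurableSet S := by
    have : IsOpen {x : ℝ | ∃ j, ∃ m : ℤ, lam j * x - m ∈ Set.Ioo a b} := by
      simp only [Set.ofPred_exists]
      refine isOpen_iUnion fun j => isOpen_iUnion fun m => ?_
      exact isOpen_Ioo.preimage (by fun_prop)
    exact this.measurableSet.compl
  rw [ae_restrict_iff' hSm] at key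
  filter_upwards [key] with x hx
  by_contra hxS
  have hxS' : x ∈ S := hxS
  have h1 := @hx hxS' ℕ atTop
    (fun j => ((a + b) / 2 + ⌊lam j * x⌋) / lam j) (fun j => (b - a) / (4 * lam j)) ?_ ?_
  · have h2 : ∀ᶠ j in atTop, volume (S ∩ Metric.closedBall
        (((a + b) / 2 + ⌊lam j * x⌋) / lam j) ((b - a) / (4 * lam j))) /
        volume (Metric.closedBall (((a + b) / 2 + ⌊lam j * x⌋) / lam j)
          ((b - a) / (4 * lam j))) = 0 := by
      filter_upwards [hl.eventually_gt_atTop 0] with j hj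
      have : S ∩ Metric.closedBall (((a + b) / 2 + ⌊lam j * x⌋) / lam j)
          ((b - a) / (4 * lam j)) = ∅ := by
        ext y
        simp only [Set.mem_inter_iff, Metric.mem_closedBall, Set.mem_empty_iff_false, iff_false,
          not_and]
        intro hy hd
        apply hy
        refine ⟨j, ⌊lam j * x⌋, ?_⟩
        rw [Real.dist_eq, abs_le] at hd
        have e1 : lam j * (((a + b) / 2 + ⌊lam j * x⌋) / lam j) = (a + b) / 2 + ⌊lam j * x⌋ := by
          field_simp
        have e2 : lam j * ((b - a) / (4 * lam j)) = (b - a) / 4 := by field_simp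
        have h3 := mul_le_mul_of_nonneg_left hd.1 hj.le
        have h4 := mul_le_mul_of_nonneg_left hd.2 hj.le
        rw [mul_sub, e1] at h3 h4
        rw [mul_neg, e2] at h3
        rw [e2] at h4
        constructor <;> linarith
      rw [this]; simp
    have h3 := tendsto_nhds_unique (h1.congr' h2) tendsto_const_nhds
    exact one_ne_zero h3
  · rw [tendsto_nhdsWithin_iff]
    constructor
    · exact Tendsto.div_atTop tendsto_const_nhds (hl.const_mul_atTop (by norm_num))
    · filter_upwards [hl.eventually_gt_atTop 0] with j hj
      exact Set.mem_Ioi.2 (div_pos (sub_pos.2 hab) (mul_pos (by norm_num) hj))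
  · filter_upwards [hl.eventually_gt_atTop 0] with j hj
    rw [Metric.mem_closedBall, Real.dist_eq]
    have e : 4 * (1 + |a| + |b|) / (b - a) * ((b - a) / (4 * lam j)) =
        (1 + |a| + |b|) / lam j := by
      have : b - a ≠ 0 := by linarith
      field_simp
    rw [e]
    have e3 : x - ((a + b) / 2 + ⌊lam j * x⌋) / lam j =
      (lam j * x - ((a + b) / 2 + ⌊lam j * x⌋)) / lam j := by field_simp
    rw [e3, abs_div, abs_of_pos hj]
    gcongr
    have f1 := Int.floor_le (lam j * x)
    have f2 := Int.lt_floor_add_one (lam j * x)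
    rw [abs_le]
    have := neg_abs_le a
    have := neg_abs_le b
    have := le_abs_self a
    have := le_abs_self b
    constructor <;> linarith

lemma metric_lemma (lam : ℕ → ℝ) (hl : Tendsto lam atTop atTop) {a b : ℝ} (hab : a < b) :
    ∀ᵐ x : ℝ, ∀ n : ℕ, ∃ j, n ≤ j ∧ ∃ m : ℤ, lam j * x - m ∈ Set.Ioo a b := by
  rw [ae_all_iff]
  intro n
  filter_upwards [metric_lemma0 (fun j => lam (j + n)) (hl.comp (tendsto_add_atTop_nat n)) hab]
    with x ⟨j, m, h⟩
  exact ⟨j + n, by omega, m, h⟩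

/-- The slope. -/
lemma exists_slope : ∃ (α : ℝ) (q : ℕ → ℕ) (a : ℕ → ℤ) (η : ℕ → ℝ), 0 < α ∧ α < 1 ∧
    Tendsto (fun n => (q n : ℝ)) atTop atTop ∧
    ∀ n, Odd (q n) ∧ 1 ≤ q n ∧ IsCoprime (a n) (q n : ℤ) ∧ 0 < η n ∧
      α = a n / q n + η n ∧ η n * (q n : ℝ) ^ 5 ≤ 1 := by
  have hrat : ∀ n : ℕ, 2 ≤ n → ∃ p : ℤ, LiouvilleNumber.partialSum 3 n =
      (3 * p + 1 : ℤ) / ((3 ^ n.factorial : ℕ) : ℝ) := by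
    intro n hn
    induction n, hn using Nat.le_induction with
    | base => exact ⟨2, by
        norm_num [LiouvilleNumber.partialSum, Finset.sum_range_succ, Nat.factorial]⟩
    | succ n hn ih =>
      obtain ⟨p, hp⟩ := ih
      have hlt : n.factorial < (n + 1).factorial := (Nat.factorial_lt (by omega)).2 (by omega)
      obtain ⟨d, hd⟩ := Nat.exists_eq_add_of_lt hlt
      refine ⟨(3 * p + 1) * 3 ^ d, ?_⟩
      rw [LiouvilleNumber.partialSum_succ, hp, hd]
      push_cast
      rw [pow_succ, pow_add]
      field_simp
  choose! p hp using hrat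
  refine ⟨liouvilleNumber 3, fun n => 3 ^ (n + 5).factorial,
    fun n => 3 * p (n + 5) + 1,
    fun n => LiouvilleNumber.remainder 3 (n + 5), ?_, ?_, ?_, ?_⟩
  · rw [← LiouvilleNumber.partialSum_add_remainder (by norm_num) 1]
    have := LiouvilleNumber.remainder_pos (m := 3) (by norm_num) 1
    have h : (0 : ℝ) < LiouvilleNumber.partialSum 3 1 := by
      norm_num [LiouvilleNumber.partialSum, Finset.sum_range_succ, Nat.factorial]
    linarith
  · rw [← LiouvilleNumber.partialSum_add_remainder (by norm_num) 1]
    have := LiouvilleNumber.remainder_lt 1 (m := 3) (by norm_num)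
    have h : LiouvilleNumber.partialSum 3 1 = 2 / 3 := by
      norm_num [LiouvilleNumber.partialSum, Finset.sum_range_succ, Nat.factorial]
    norm_num [Nat.factorial] at this
    linarith
  · refine tendsto_natCast_atTop_atTop.comp ?_
    refine tendsto_atTop_mono (fun n => ?_) tendsto_id
    have h1 : n ≤ (n + 5).factorial := le_trans (by omega) (Nat.self_le_factorial _)
    exact h1.trans (Nat.lt_pow_self (by norm_num)).le
  · intro n
    refine ⟨Odd.pow (by decide), Nat.one_le_pow _ _ (by norm_num), ?_,
      LiouvilleNumber.remainder_pos (by norm_num) _, ?_, ?_⟩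
    · push_cast
      apply IsCoprime.pow_right
      exact ⟨1, -p (n + 5), by ring⟩
    · have := hp (n + 5) (by omega)
      rw [← LiouvilleNumber.partialSum_add_remainder (by norm_num) (n + 5), this]
    · have h := LiouvilleNumber.remainder_lt (n + 5) (m := 3) (by norm_num)
      have h0 := LiouvilleNumber.remainder_pos (m := 3) (by norm_num) (n + 5)
      have h2 : (((3 : ℝ) ^ (n + 5).factorial)) ^ 5 ≤ (((3 : ℝ) ^ (n + 5).factorial)) ^ (n + 5) := by
        apply pow_le_pow_right₀ (one_le_pow₀ (by norm_num)) (by omega)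
      have h3 : (0 : ℝ) < (((3 : ℝ) ^ (n + 5).factorial)) ^ (n + 5) := by positivity
      rw [lt_div_iff₀ h3] at h
      push_cast
      nlinarith

/-- residue choice -/
lemma exists_residue {a : ℤ} {q : ℕ} (hq : 1 ≤ q) (h : IsCoprime a (q : ℤ)) (c : ℤ) :
    ∃ i : ℕ, i < q ∧ ∃ m : ℤ, c + i * a = m * q := by
  obtain ⟨u, v, huv⟩ := h
  refine ⟨((-c * u) % q).toNat, ?_, ?_⟩
  · have := Int.emod_lt_of_pos (-c * u) (by exact_mod_cast hq : (0 : ℤ) < q)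
    have := Int.emod_nonneg (-c * u) (by omega : (q : ℤ) ≠ 0)
    omega
  · have h0 := Int.emod_nonneg (-c * u) (by omega : (q : ℤ) ≠ 0)
    rw [Int.toNat_of_nonneg h0]
    have h1 := Int.emod_add_mul_ediv (-c * u) q
    refine ⟨c * v - ((-c * u) / q) * a, ?_⟩
    have h2 : (-c * u) % q = -c * u - q * ((-c * u) / q) := by linarith
    rw [h2]
    linear_combination (-c) * huv

/-- leaf speed -/
def hh (α : ℝ) (b c : ℂ) (s : ℝ) : ℝ :=
  (2 - (b * Complex.exp ((s : ℂ) * Complex.I)).re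
    - (c ^ 2 * Complex.exp (((2 * α * s : ℝ) : ℂ) * Complex.I)).re) ^ 2

def HH (y z : ℝ) : ℝ := (2 - Real.cos y - Real.cos (2 * z)) ^ 2

lemma hh_exp (α y z s : ℝ) :
    hh α (Circle.exp y : ℂ) (Circle.exp z : ℂ) s = HH (y + s) (z + α * s) := by
  unfold hh HH
  rw [Circle.coe_exp, Circle.coe_exp, ← Complex.exp_nat_mul, ← Complex.exp_add, ← Complex.exp_add]
  have e1 : (y : ℂ) * Complex.I + s * Complex.I = ((y + s : ℝ) : ℂ) * Complex.I := by
    push_cast; ring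
  have e2 : ((2 : ℕ) : ℂ) * ((z : ℂ) * Complex.I) + ((2 * α * s : ℝ) : ℂ) * Complex.I
      = ((2 * (z + α * s) : ℝ) : ℂ) * Complex.I := by
    push_cast; ring
  rw [e1, e2, Complex.exp_ofReal_mul_I_re, Complex.exp_ofReal_mul_I_re]

lemma HH_nonneg (y z : ℝ) : 0 ≤ HH y z := sq_nonneg _

lemma HH_le (y z : ℝ) : HH y z ≤ 16 := by
  unfold HH
  have := Real.neg_one_le_cos y
  have := Real.neg_one_le_cos (2 * z)
  have := Real.cos_le_one y
  have := Real.cos_le_one (2 * z)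
  nlinarith

lemma HH_lip {α : ℝ} (h0 : 0 < α) (h1 : α < 1) (y z s s' : ℝ) :
    |HH (y + s) (z + α * s) - HH (y + s') (z + α * s')| ≤ 24 * |s - s'| := by
  unfold HH
  have a1 := Real.abs_cos_sub_cos_le (y + s) (y + s')
  have a2 := Real.abs_cos_sub_cos_le (2 * (z + α * s)) (2 * (z + α * s'))
  have e1 : y + s - (y + s') = s - s' := by ring
  have e2 : 2 * (z + α * s) - 2 * (z + α * s') = 2 * α * (s - s') := by ring
  rw [e1] at a1
  rw [e2, abs_mul, abs_of_pos (by positivity : 0 < 2 * α)] at a2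
  have b1 := Real.neg_one_le_cos (y + s)
  have b2 := Real.neg_one_le_cos (2 * (z + α * s))
  have b3 := Real.cos_le_one (y + s)
  have b4 := Real.cos_le_one (2 * (z + α * s))
  have b5 := Real.neg_one_le_cos (y + s')
  have b6 := Real.neg_one_le_cos (2 * (z + α * s'))
  have b7 := Real.cos_le_one (y + s')
  have b8 := Real.cos_le_one (2 * (z + α * s'))
  generalize Real.cos (y + s) = A at *
  generalize Real.cos (y + s') = A' at *
  generalize Real.cos (2 * (z + α * s)) = B at *
  generalize Real.cos (2 * (z + α * s')) = B' at *
  have e3 : (2 - A - B) ^ 2 - (2 - A' - B') ^ 2 =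
    ((A' - A) + (B' - B)) * ((2 - A - B) + (2 - A' - B')) := by ring
  rw [e3, abs_mul, abs_of_nonneg (by linarith : 0 ≤ (2 - A - B) + (2 - A' - B'))]
  have c1 : |(A' - A) + (B' - B)| ≤ 3 * |s - s'| := by
    refine (abs_add_le _ _).trans ?_
    rw [abs_sub_comm A' A, abs_sub_comm B' B]
    have : 2 * α * |s - s'| ≤ 2 * |s - s'| := by nlinarith [abs_nonneg (s - s')]
    linarith
  have : 0 ≤ |s - s'| := abs_nonneg _
  calc _ ≤ (3 * |s - s'|) * 8 := by
        apply mul_le_mul c1 (by linarith) (by linarith) (by linarith)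
    _ = _ := by ring

abbrev CI := C(unitInterval, ℝ)
abbrev CC := C(unitInterval, ℂ)

/-- `u ↦ i β u` -/
def linB (β : ℝ) : CI →L[ℝ] CC :=
  ContinuousLinearMap.compLeftContinuous ℝ unitInterval
    ((((β : ℂ) * Complex.I) • Complex.ofRealCLM : ℝ →L[ℝ] ℂ))

def eB (β : ℝ) (u : CI) : CC := NormedSpace.exp (linB β u)

lemma eB_apply (β : ℝ) (u : CI) (t : unitInterval) :
    eB β u t = Complex.exp (((β * u t : ℝ) : ℂ) * Complex.I) := by
  let _ : NormedAlgebra ℚ CC := NormedAlgebra.restrictScalars ℚ ℝ CC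
  have h := NormedSpace.map_exp (ContinuousMap.evalAlgHom ℂ ℂ t : CC →ₐ[ℂ] ℂ)
    (by
      change Continuous fun f : CC => f t
      fun_prop) (linB β u)
  have h2 : eB β u t = (ContinuousMap.evalAlgHom ℂ ℂ t : CC →ₐ[ℂ] ℂ) (NormedSpace.exp (linB β u)) :=
    rfl
  rw [h2, h, Complex.exp_eq_exp_ℂ]
  congr 1
  change ((β : ℂ) * Complex.I) * ((u t : ℝ) : ℂ) = _
  push_cast
  ring

lemma contDiff_eB (β : ℝ) {n : WithTop ℕ∞} : ContDiff ℝ n (eB β) := by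
  have h1 : ContDiff ℝ n (NormedSpace.exp : CC → CC) := by
    rw [contDiff_iff_contDiffAt]
    intro x
    exact (NormedSpace.exp_analytic (𝕂 := ℝ) x).contDiffAt
  exact h1.comp (linB β).contDiff

def reB : CC →L[ℝ] CI := ContinuousLinearMap.compLeftContinuous ℝ unitInterval Complex.reCLM

def GB (α : ℝ) (p : ℂ × ℂ) (u : CI) : CI :=
  ((2 : ℝ) • (1 : CI) - reB (p.1 • eB 1 u) - reB ((p.2 ^ 2) • eB (2 * α) u)) ^ 2

lemma GB_apply (α : ℝ) (p : ℂ × ℂ) (u : CI) (t : unitInterval) :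
    GB α p u t = hh α p.1 p.2 (u t) := by
  have h1 : reB (p.1 • eB 1 u) t = (p.1 * eB 1 u t).re := rfl
  have h2 : reB ((p.2 ^ 2) • eB (2 * α) u) t = (p.2 ^ 2 * eB (2 * α) u t).re := rfl
  unfold GB hh
  rw [ContinuousMap.pow_apply, ContinuousMap.sub_apply, ContinuousMap.sub_apply, h1, h2,
    eB_apply, eB_apply]
  simp

lemma contDiff_GB (α : ℝ) {n : WithTop ℕ∞} :
    ContDiff ℝ n (fun x : (ℂ × ℂ) × CI => GB α x.1 x.2) := by
  unfold GB
  have h1 : ContDiff ℝ n (fun x : (ℂ × ℂ) × CI => eB 1 x.2) := (contDiff_eB 1).comp contDiff_snd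
  have h2 : ContDiff ℝ n (fun x : (ℂ × ℂ) × CI => eB (2 * α) x.2) :=
    (contDiff_eB (2 * α)).comp contDiff_snd
  have h3 : ContDiff ℝ n (fun x : (ℂ × ℂ) × CI => x.1.1) := by fun_prop
  have h4 : ContDiff ℝ n (fun x : (ℂ × ℂ) × CI => x.1.2 ^ 2) := by fun_prop
  have h5 := reB.contDiff.comp (h3.smul h1)
  have h6 := reB.contDiff.comp (h4.smul h2)
  exact ((contDiff_const.sub h5).sub h6).pow 2

/-- Volterra operator -/
def volFun (u : CI) : CI :=
  ⟨fun t => ∫ r in (0 : ℝ)..t, u (Set.projIcc 0 1 zero_le_one r), by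
    have : Continuous fun t : ℝ => ∫ r in (0 : ℝ)..t, u (Set.projIcc 0 1 zero_le_one r) :=
      intervalIntegral.continuous_primitive
        (fun a b => (Continuous.intervalIntegrable (by fun_prop) _ _)) 0
    exact this.comp continuous_subtype_val⟩

lemma volFun_apply (u : CI) (t : unitInterval) :
    volFun u t = ∫ r in (0 : ℝ)..t, u (Set.projIcc 0 1 zero_le_one r) := rfl

def volB : CI →L[ℝ] CI :=
  LinearMap.mkContinuous
    { toFun := volFun
      map_add' := fun u v => by
        ext t
        simp only [volFun_apply, ContinuousMap.add_apply]
        exact intervalIntegral.integral_add (Continuous.intervalIntegrable (by fun_prop) _ _)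
          (Continuous.intervalIntegrable (by fun_prop) _ _)
      map_smul' := fun c u => by
        ext t
        simp only [volFun_apply, ContinuousMap.smul_apply, RingHom.id_apply]
        exact intervalIntegral.integral_smul _ _ } 1 (by
    intro u
    rw [ContinuousMap.norm_le _ (by positivity)]
    intro t
    change ‖∫ r in (0 : ℝ)..t, u (Set.projIcc 0 1 zero_le_one r)‖ ≤ _
    refine (intervalIntegral.norm_integral_le_of_norm_le_const
      (C := ‖u‖) (fun r _ => u.norm_coe_le_norm _)).trans ?_
    have := t.2.1
    have := t.2.2
    rw [sub_zero, abs_of_nonneg t.2.1, one_mul]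
    nlinarith [norm_nonneg u])

lemma volB_apply (u : CI) (t : unitInterval) :
    volB u t = ∫ r in (0 : ℝ)..t, u (Set.projIcc 0 1 zero_le_one r) := rfl

lemma volB_norm (u : CI) : ‖volB u‖ ≤ ‖u‖ := by
  have := (volB.le_opNorm u).trans (mul_le_mul_of_nonneg_right
    (LinearMap.mkContinuous_norm_le _ zero_le_one _) (norm_nonneg _))
  simpa using this

/-- The Picard operator. -/
def NB (α : ℝ) (x : ℝ × ℂ × ℂ) (u : CI) : CI := x.1 • volB (GB α x.2 u)

lemma contDiff_NB (α : ℝ) {n : WithTop ℕ∞} :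
    ContDiff ℝ n (fun x : (ℝ × ℂ × ℂ) × CI => NB α x.1 x.2) := by
  unfold NB
  have h1 : ContDiff ℝ n (fun x : (ℝ × ℂ × ℂ) × CI => GB α x.1.2 x.2) :=
    (contDiff_GB α).comp (f := fun x : (ℝ × ℂ × ℂ) × CI => (x.1.2, x.2)) (by fun_prop)
  have h3 : ContDiff ℝ n (fun x : (ℝ × ℂ × ℂ) × CI => x.1.1) := by fun_prop
  exact h3.smul (volB.contDiff.comp h1)

lemma NB_lip {α : ℝ} (h0 : 0 < α) (h1 : α < 1) {θ : ℝ} (hθ : |θ| ≤ 1 / 48) (b c : Circle)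
    (u v : CI) : ‖NB α (θ, (b : ℂ), (c : ℂ)) u - NB α (θ, (b : ℂ), (c : ℂ)) v‖
      ≤ 1 / 2 * ‖u - v‖ := by
  unfold NB
  rw [← smul_sub, ← map_sub, norm_smul, Real.norm_eq_abs]
  have h2 : ‖GB α ((b : ℂ), (c : ℂ)) u - GB α ((b : ℂ), (c : ℂ)) v‖ ≤ 24 * ‖u - v‖ := by
    rw [ContinuousMap.norm_le _ (by positivity)]
    intro t
    rw [ContinuousMap.sub_apply, GB_apply, GB_apply, ← Circle.exp_arg b, ← Circle.exp_arg c]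
    simp only
    rw [hh_exp, hh_exp, Real.norm_eq_abs]
    refine (HH_lip h0 h1 _ _ _ _).trans ?_
    have := (u - v).norm_coe_le_norm t
    rw [ContinuousMap.sub_apply, Real.norm_eq_abs] at this
    linarith
  calc |θ| * ‖volB _‖ ≤ 1 / 48 * (24 * ‖u - v‖) :=
        mul_le_mul hθ ((volB_norm _).trans h2) (norm_nonneg _) (by norm_num)
    _ = _ := by ring

lemma NB_exists {α : ℝ} (h0 : 0 < α) (h1 : α < 1) {θ : ℝ} (hθ : |θ| ≤ 1 / 48) (b c : Circle) :
    ∃ u : CI, NB α (θ, (b : ℂ), (c : ℂ)) u = u := by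
  have hc : ContractingWith (1 / 2 : ℝ≥0) (NB α (θ, (b : ℂ), (c : ℂ))) := by
    refine ⟨by
      rw [← NNReal.coe_lt_coe]; norm_num, LipschitzWith.of_dist_le_mul fun u v => ?_⟩
    rw [dist_eq_norm, dist_eq_norm]
    have := NB_lip h0 h1 hθ b c u v
    simpa using this
  exact ⟨_, hc.fixedPoint_isFixedPt⟩

lemma NB_unique {α : ℝ} (h0 : 0 < α) (h1 : α < 1) {θ : ℝ} (hθ : |θ| ≤ 1 / 48) {b c : Circle}
    {u v : CI} (hu : NB α (θ, (b : ℂ), (c : ℂ)) u = u) (hv : NB α (θ, (b : ℂ), (c : ℂ)) v = v) :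
    u = v := by
  have := NB_lip h0 h1 hθ b c u v
  rw [hu, hv] at this
  have h : ‖u - v‖ ≤ 0 := by linarith
  exact sub_eq_zero.1 (norm_le_zero_iff.1 h)

open Classical in
/-- the solution curve -/
def solC (α θ : ℝ) (b c : Circle) : CI :=
  if h : ∃ u : CI, NB α (θ, (b : ℂ), (c : ℂ)) u = u then h.choose else 0

lemma solC_spec {α : ℝ} (h0 : 0 < α) (h1 : α < 1) {θ : ℝ} (hθ : |θ| ≤ 1 / 48) (b c : Circle) :
    NB α (θ, (b : ℂ), (c : ℂ)) (solC α θ b c) = solC α θ b c := by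
  have h := NB_exists h0 h1 hθ b c
  rw [solC, dif_pos h]
  exact h.choose_spec

/-- Leaf displacement. -/
def tau (α θ : ℝ) (b c : Circle) : ℝ := solC α θ b c 1

/-- local smoothness of the solution curve -/
lemma solC_smooth {α : ℝ} (h0 : 0 < α) (h1 : α < 1) {θ : ℝ} (hθ : |θ| < 1 / 48) (b c : Circle) :
    ∃ ψ : ℝ × ℂ × ℂ → ℝ, ContDiffAt ℝ ((⊤ : ℕ∞) : WithTop ℕ∞) ψ (θ, (b : ℂ), (c : ℂ)) ∧
      ∀ᶠ x : ℝ × Circle × Circle in 𝓝 (θ, b, c),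
        tau α x.1 x.2.1 x.2.2 = ψ (x.1, (x.2.1 : ℂ), (x.2.2 : ℂ)) := by
  set F : (ℝ × ℂ × ℂ) × CI → CI := fun x => x.2 - NB α x.1 x.2 with hF
  set u₀ := solC α θ b c with hu₀
  set p₀ : ℝ × ℂ × ℂ := (θ, (b : ℂ), (c : ℂ)) with hp₀
  have hfix : NB α p₀ u₀ = u₀ := solC_spec h0 h1 hθ.le b c
  have hN : ContDiff ℝ ((⊤ : ℕ∞) : WithTop ℕ∞) (fun x : (ℝ × ℂ × ℂ) × CI => NB α x.1 x.2) :=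
    contDiff_NB α
  have cdf : ContDiffAt ℝ ((⊤ : ℕ∞) : WithTop ℕ∞) F (p₀, u₀) :=
    (contDiff_snd.sub hN).contDiffAt
  have hne : ((⊤ : ℕ∞) : WithTop ℕ∞) ≠ 0 := by simp
  have hinv : (fderiv ℝ F (p₀, u₀) ∘L .inr ℝ (ℝ × ℂ × ℂ) CI).IsInvertible := by
    have d1 : HasFDerivAt (fun u : CI => F (p₀, u))
        (fderiv ℝ F (p₀, u₀) ∘L .inr ℝ (ℝ × ℂ × ℂ) CI) u₀ :=
      (cdf.differentiableAt hne).hasFDerivAt.comp u₀ (hasFDerivAt_prodMk_right p₀ u₀)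
    have hd : DifferentiableAt ℝ (NB α p₀) u₀ := by
      have : ContDiff ℝ ((⊤ : ℕ∞) : WithTop ℕ∞) (NB α p₀) :=
        hN.comp (f := fun u : CI => (p₀, u)) (by fun_prop)
      exact this.contDiffAt.differentiableAt hne
    have d2 : HasFDerivAt (fun u : CI => F (p₀, u))
        (ContinuousLinearMap.id ℝ CI - fderiv ℝ (NB α p₀) u₀) u₀ :=
      (hasFDerivAt_id u₀).sub hd.hasFDerivAt
    rw [d1.unique d2]
    have hn : ‖fderiv ℝ (NB α p₀) u₀‖ ≤ 1 / 2 := by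
      apply norm_fderiv_le_of_lip' ℝ (by norm_num)
      exact Eventually.of_forall fun u => NB_lip h0 h1 hθ.le b c u u₀
    let U := Units.oneSub (fderiv ℝ (NB α p₀) u₀) (by linarith)
    exact ⟨ContinuousLinearEquiv.ofUnit U, rfl⟩
  refine ⟨fun p => cdf.implicitFunction hne hinv p 1, ?_, ?_⟩
  · have := cdf.contDiffAt_implicitFunction hne hinv
    exact ((ContinuousMap.evalCLM ℝ (1 : unitInterval)).contDiff.contDiffAt).comp _ this
  · have ev := cdf.eventually_apply_eq_iff_implicitFunction hne hinv
    have hF0 : F (p₀, u₀) = 0 := by simp only [hF]; rw [hfix, sub_self]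
    rw [hF0] at ev
    have hcoe : Continuous fun x : ℝ × Circle × Circle =>
        ((x.1, (x.2.1 : ℂ), (x.2.2 : ℂ)) : ℝ × ℂ × ℂ) := by fun_prop
    have hθ' : ∀ᶠ x : ℝ × Circle × Circle in 𝓝 (θ, b, c), |x.1| < 1 / 48 :=
      (by fun_prop : Continuous fun x : ℝ × Circle × Circle => |x.1|).continuousAt.eventually
        (gt_mem_nhds hθ)
    have ht : Tendsto (fun x : ℝ × Circle × Circle =>
        (((x.1, (x.2.1 : ℂ), (x.2.2 : ℂ)) : ℝ × ℂ × ℂ), solC α x.1 x.2.1 x.2.2))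
        (𝓝 (θ, b, c)) (𝓝 (p₀, u₀)) := by
      refine Tendsto.prodMk_nhds hcoe.continuousAt ?_
      rw [tendsto_iff_norm_sub_tendsto_zero]
      have hlim : Tendsto (fun x : ℝ × Circle × Circle =>
          2 * ‖NB α (x.1, (x.2.1 : ℂ), (x.2.2 : ℂ)) u₀ - NB α p₀ u₀‖) (𝓝 (θ, b, c)) (𝓝 0) := by
        have hc : Continuous fun x : ℝ × Circle × Circle =>
            2 * ‖NB α (x.1, (x.2.1 : ℂ), (x.2.2 : ℂ)) u₀ - NB α p₀ u₀‖ := by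
          have := hN.continuous.comp (f := fun x : ℝ × Circle × Circle =>
            (((x.1, (x.2.1 : ℂ), (x.2.2 : ℂ)) : ℝ × ℂ × ℂ), u₀)) (hcoe.prodMk continuous_const)
          exact continuous_const.mul ((this.sub continuous_const).norm)
        have := hc.tendsto (θ, b, c)
        simpa [hp₀] using this
      refine squeeze_zero' (Eventually.of_forall fun x => norm_nonneg _) ?_ hlim
      filter_upwards [hθ'] with x hx
      have e1 := solC_spec h0 h1 hx.le x.2.1 x.2.2
      have e2 := NB_lip h0 h1 hx.le x.2.1 x.2.2 (solC α x.1 x.2.1 x.2.2) u₀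
      rw [e1] at e2
      have e3 : solC α x.1 x.2.1 x.2.2 - u₀ =
        (solC α x.1 x.2.1 x.2.2 - NB α (x.1, (x.2.1 : ℂ), (x.2.2 : ℂ)) u₀)
          + (NB α (x.1, (x.2.1 : ℂ), (x.2.2 : ℂ)) u₀ - NB α p₀ u₀) := by
        rw [hfix]; abel
      have e4 := norm_add_le (solC α x.1 x.2.1 x.2.2 - NB α (x.1, (x.2.1 : ℂ), (x.2.2 : ℂ)) u₀)
        (NB α (x.1, (x.2.1 : ℂ), (x.2.2 : ℂ)) u₀ - NB α p₀ u₀)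
      rw [← e3] at e4
      linarith
    filter_upwards [ht.eventually ev, hθ'] with x hx hx2
    have e1 := solC_spec h0 h1 hx2.le x.2.1 x.2.2
    have := hx.1 (by simp only [hF]; rw [e1, sub_self])
    rw [tau]
    exact congrArg (fun u : CI => u 1) this.symm

lemma sol_curve {α : ℝ} (h0 : 0 < α) (h1 : α < 1) {θ : ℝ} (hθ : |θ| ≤ 1 / 48) (y z : ℝ) :
    ∃ σ : ℝ → ℝ, σ 0 = 0 ∧ σ 1 = tau α θ (Circle.exp y) (Circle.exp z) ∧
      ∀ t ∈ Set.Icc (0 : ℝ) 1, HasDerivAt σ (θ * HH (y + σ t) (z + α * σ t)) t := by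
  set b := Circle.exp y with hb
  set c := Circle.exp z with hc
  have hs := solC_spec h0 h1 hθ b c
  set u := solC α θ b c with hu
  set g : ℝ → ℝ := fun r => GB α ((b : ℂ), (c : ℂ)) u (Set.projIcc 0 1 zero_le_one r) with hg
  have hgc : Continuous g := by rw [hg]; fun_prop
  have hval : ∀ t : unitInterval, u t = θ * ∫ r in (0 : ℝ)..t, g r := by
    intro t
    have : NB α (θ, (b : ℂ), (c : ℂ)) u t = u t := by rw [hs]
    rw [← this]
    rfl
  refine ⟨fun t => θ * ∫ r in (0 : ℝ)..t, g r, by simp, ?_, ?_⟩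
  · have := hval 1
    rw [tau, ← hu, this]
    simp
  · intro t ht
    have h2 := hval ⟨t, ht⟩
    simp only at h2 ⊢
    rw [← h2, ← hh_exp]
    have h3 : hh α (Circle.exp y : ℂ) (Circle.exp z : ℂ) (u ⟨t, ht⟩) = g t := by
      simp only [hg]
      rw [GB_apply, Set.projIcc_of_mem zero_le_one ht]
    rw [h3]
    exact (intervalIntegral.integral_hasDerivAt_right (hgc.intervalIntegrable _ _)
      (hgc.stronglyMeasurableAtFilter _ _) hgc.continuousAt).const_mul θ

lemma tau_unique {α : ℝ} (h0 : 0 < α) (h1 : α < 1) {θ : ℝ} (hθ : |θ| ≤ 1 / 48) (y z : ℝ)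
    (σ : ℝ → ℝ) (hσ : σ 0 = 0)
    (hd : ∀ t ∈ Set.Icc (0 : ℝ) 1, HasDerivAt σ (θ * HH (y + σ t) (z + α * σ t)) t) :
    σ 1 = tau α θ (Circle.exp y) (Circle.exp z) := by
  have hco : ContinuousOn σ (Set.Icc 0 1) := fun t ht => (hd t ht).continuousAt.continuousWithinAt
  let v : CI := ⟨fun t => σ t, hco.comp_continuous continuous_subtype_val (fun t => t.2)⟩
  have hv : NB α (θ, (Circle.exp y : ℂ), (Circle.exp z : ℂ)) v = v := by
    ext t
    change θ * ∫ r in (0 : ℝ)..t, GB α ((Circle.exp y : ℂ), (Circle.exp z : ℂ)) v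
      (Set.projIcc 0 1 zero_le_one r) = σ t
    rw [← intervalIntegral.integral_const_mul]
    have : ∫ r in (0 : ℝ)..t, θ * GB α ((Circle.exp y : ℂ), (Circle.exp z : ℂ)) v
        (Set.projIcc 0 1 zero_le_one r) = σ t - σ 0 := by
      apply intervalIntegral.integral_eq_sub_of_hasDerivAt
      · intro r hr
        rw [Set.uIcc_of_le t.2.1] at hr
        have hr' : r ∈ Set.Icc (0 : ℝ) 1 := ⟨hr.1, hr.2.trans t.2.2⟩
        rw [GB_apply, Set.projIcc_of_mem zero_le_one hr']
        simp only
        rw [hh_exp]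
        exact hd r hr'
      · apply Continuous.intervalIntegrable
        fun_prop
    rw [this, hσ, sub_zero]
  have := NB_unique h0 h1 hθ hv (solC_spec h0 h1 hθ _ _)
  rw [tau, ← this]
  rfl

lemma tau_inv {α : ℝ} (h0 : 0 < α) (h1 : α < 1) {θ : ℝ} (hθ : |θ| ≤ 1 / 48) (y z : ℝ) :
    tau α (-θ) (Circle.exp (y + tau α θ (Circle.exp y) (Circle.exp z)))
      (Circle.exp (z + α * tau α θ (Circle.exp y) (Circle.exp z)))
      = - tau α θ (Circle.exp y) (Circle.exp z) := by
  obtain ⟨σ, s0, s1, hd⟩ := sol_curve h0 h1 hθ y z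
  rw [← s1]
  have := tau_unique h0 h1 (θ := -θ) (by rwa [abs_neg]) (y + σ 1) (z + α * σ 1)
    (fun t => σ (1 - t) - σ 1) (by simp) (by
      intro t ht
      have e := hd (1 - t) ⟨by linarith [ht.2], by linarith [ht.1]⟩
      have e2 := (e.scomp t ((hasDerivAt_id t).const_sub 1)).sub_const (σ 1)
      have e3 : -θ * HH (y + σ 1 + (σ (1 - t) - σ 1)) (z + α * σ 1 + α * (σ (1 - t) - σ 1)) =
          (-1 : ℝ) • (θ * HH (y + σ (1 - t)) (z + α * σ (1 - t))) := by
        rw [smul_eq_mul, neg_one_mul, neg_mul]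
        congr 3 <;> ring
      rw [e3]
      exact e2)
  rw [← this]
  simp [s0]

lemma tau_time {α : ℝ} (h0 : 0 < α) (h1 : α < 1) {θ : ℝ} (hθ : |θ| ≤ 1 / 48) (y z : ℝ)
    (hne : ∀ s, HH (y + s) (z + α * s) ≠ 0) (G : ℝ → ℝ)
    (hG : ∀ s, HasDerivAt G (HH (y + s) (z + α * s))⁻¹ s) :
    G (tau α θ (Circle.exp y) (Circle.exp z)) - G 0 = θ := by
  obtain ⟨σ, s0, s1, hd⟩ := sol_curve h0 h1 hθ y z
  rw [← s1, ← s0]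
  have hd2 : ∀ t ∈ Set.Icc (0 : ℝ) 1, HasDerivAt (fun t => G (σ t)) θ t := by
    intro t ht
    have := (hG (σ t)).comp t (hd t ht)
    have e3 : (HH (y + σ t) (z + α * σ t))⁻¹ * (θ * HH (y + σ t) (z + α * σ t)) = θ := by
      rw [mul_comm, mul_assoc, mul_inv_cancel₀ (hne (σ t)), mul_one]
    rw [e3] at this
    exact this
  obtain ⟨ξ, _, h⟩ := exists_hasDerivAt_eq_slope (fun t => G (σ t)) (fun _ => θ) zero_lt_one
    (fun t ht => (hd2 t ht).continuousAt.continuousWithinAt)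
    (fun t ht => hd2 t ⟨ht.1.le, ht.2.le⟩)
  rw [h]; simp

lemma tau_ge {α : ℝ} (h0 : 0 < α) (h1 : α < 1) {θ : ℝ} (hθ0 : 0 ≤ θ) (hθ : θ ≤ 1 / 48) (y z : ℝ) :
    0 ≤ tau α θ (Circle.exp y) (Circle.exp z) ∧
    θ * HH y z ≤ 2 * tau α θ (Circle.exp y) (Circle.exp z) := by
  obtain ⟨σ, s0, s1, hd⟩ := sol_curve h0 h1 (θ := θ) (by rwa [abs_of_nonneg hθ0]) y z
  rw [← s1]
  have hco : ContinuousOn σ (Set.Icc 0 1) := fun t ht => (hd t ht).continuousAt.continuousWithinAt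
  have hmono : MonotoneOn σ (Set.Icc 0 1) := by
    apply monotoneOn_of_deriv_nonneg (convex_Icc 0 1) hco
    · intro t ht
      rw [interior_Icc] at ht
      exact (hd t ⟨ht.1.le, ht.2.le⟩).differentiableAt.differentiableWithinAt
    · intro t ht
      rw [interior_Icc] at ht
      rw [(hd t ⟨ht.1.le, ht.2.le⟩).deriv]
      exact mul_nonneg hθ0 (HH_nonneg _ _)
  obtain ⟨ξ, hξ, h⟩ := exists_hasDerivAt_eq_slope σ _ zero_lt_one hco
    (fun t ht => hd t ⟨ht.1.le, ht.2.le⟩)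
  have a1 := hmono (⟨le_refl 0, zero_le_one⟩) ⟨hξ.1.le, hξ.2.le⟩ hξ.1.le
  have a2 := hmono ⟨hξ.1.le, hξ.2.le⟩ (⟨zero_le_one, le_refl 1⟩) hξ.2.le
  rw [s0] at a1 h
  simp only [sub_zero, div_one] at h
  have a3 := HH_lip h0 h1 y z 0 (σ ξ)
  simp only [add_zero, mul_zero, zero_sub, abs_neg, abs_of_nonneg a1] at a3
  have a4 := (abs_le.1 a3).2
  refine ⟨a1.trans a2, ?_⟩
  have : θ * HH y z ≤ θ * (HH (y + σ ξ) (z + α * σ ξ) + 24 * σ ξ) :=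
    mul_le_mul_of_nonneg_left (by linarith) hθ0
  nlinarith

/-- covering map -/
def EE (w : ℝ × ℝ × ℝ) : T3 := (Circle.exp w.1, Circle.exp w.2.1, Circle.exp w.2.2)

lemma EE_continuous : Continuous EE := by unfold EE; fun_prop

lemma EE_surj (x : T3) : ∃ w, EE w = x := by
  refine ⟨(Complex.arg x.1, Complex.arg x.2.1, Complex.arg x.2.2), ?_⟩
  simp [EE, Circle.exp_arg]

lemma EE_add (w w' : ℝ × ℝ × ℝ) : EE (w + w') = EE w * EE w' := by
  simp [EE, Circle.exp_add]

/-- time-θ map of the slowed linear flow -/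
def fT (v α θ : ℝ) (x : T3) : T3 :=
  (x.1 * Circle.exp (v * tau α θ x.2.1 x.2.2), x.2.1 * Circle.exp (tau α θ x.2.1 x.2.2),
    x.2.2 * Circle.exp (α * tau α θ x.2.1 x.2.2))

lemma fT_EE (v α θ x y z : ℝ) : fT v α θ (EE (x, y, z)) =
    EE (x + v * tau α θ (Circle.exp y) (Circle.exp z), y + tau α θ (Circle.exp y) (Circle.exp z),
      z + α * tau α θ (Circle.exp y) (Circle.exp z)) := by
  simp [fT, EE, Circle.exp_add]

lemma fT_inv (v : ℝ) {α : ℝ} (h0 : 0 < α) (h1 : α < 1) {θ : ℝ} (hθ : |θ| ≤ 1 / 48) (x : T3) :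
    fT v α (-θ) (fT v α θ x) = x := by
  obtain ⟨⟨x, y, z⟩, rfl⟩ := EE_surj x
  rw [fT_EE, fT_EE, tau_inv h0 h1 hθ]
  congr 2
  · ring
  · congr 1 <;> ring

lemma tau_contAt {α : ℝ} (h0 : 0 < α) (h1 : α < 1) {θ : ℝ} (hθ : |θ| < 1 / 48) (b c : Circle) :
    ContinuousAt (fun x : ℝ × Circle × Circle => tau α x.1 x.2.1 x.2.2) (θ, b, c) := by
  obtain ⟨ψ, h, he⟩ := solC_smooth h0 h1 hθ b c
  refine ContinuousAt.congr ?_ (EventuallyEq.symm he)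
  have hcoe : Continuous fun x : ℝ × Circle × Circle =>
      ((x.1, (x.2.1 : ℂ), (x.2.2 : ℂ)) : ℝ × ℂ × ℂ) := by fun_prop
  exact ContinuousAt.comp (f := fun x : ℝ × Circle × Circle =>
      ((x.1, (x.2.1 : ℂ), (x.2.2 : ℂ)) : ℝ × ℂ × ℂ)) (g := ψ) (x := (θ, b, c))
      h.continuousAt hcoe.continuousAt

lemma tau_smooth {α : ℝ} (h0 : 0 < α) (h1 : α < 1) {θ : ℝ} (hθ : |θ| < 1 / 48) :
    ContMDiff modelT3 𝓘(ℝ, ℝ) ((⊤ : ℕ∞) : WithTop ℕ∞)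
      (fun x : T3 => tau α θ x.2.1 x.2.2) := by
  intro x
  obtain ⟨ψ, h, he⟩ := solC_smooth h0 h1 hθ x.2.1 x.2.2
  have hcont : Continuous fun x : T3 => (θ, x.2.1, x.2.2) := by fun_prop
  have he2 := (hcont.tendsto x).eventually he
  refine ContMDiffAt.congr_of_eventuallyEq ?_ he2
  have _ : Fact (Module.finrank ℝ ℂ = 1 + 1) := Complex.finrank_real_complex_fact
  have hc : ContMDiff (𝓡 1) 𝓘(ℝ, ℂ) ((⊤ : ℕ∞) : WithTop ℕ∞) (fun x : Circle => (x : ℂ)) :=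
    contMDiff_coe_sphere
  have h2 : ContMDiff modelT3 𝓘(ℝ, ℂ) ((⊤ : ℕ∞) : WithTop ℕ∞) (fun x : T3 => (x.2.1 : ℂ)) :=
    hc.comp (contMDiff_fst.comp contMDiff_snd)
  have h3 : ContMDiff modelT3 𝓘(ℝ, ℂ) ((⊤ : ℕ∞) : WithTop ℕ∞) (fun x : T3 => (x.2.2 : ℂ)) :=
    hc.comp (contMDiff_snd.comp contMDiff_snd)
  have h4 : ContMDiff modelT3 𝓘(ℝ, ℝ × ℂ × ℂ) ((⊤ : ℕ∞) : WithTop ℕ∞)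
      (fun x : T3 => ((θ, (x.2.1 : ℂ), (x.2.2 : ℂ)) : ℝ × ℂ × ℂ)) :=
    contMDiff_const.prodMk_space (h2.prodMk_space h3)
  exact ContMDiffAt.comp (g := ψ) (f := fun x : T3 => ((θ, (x.2.1 : ℂ), (x.2.2 : ℂ)) : ℝ × ℂ × ℂ))
    x h.contMDiffAt h4.contMDiffAt

lemma fT_smooth (v : ℝ) {α : ℝ} (h0 : 0 < α) (h1 : α < 1) {θ : ℝ} (hθ : |θ| < 1 / 48) :
    ContMDiff modelT3 modelT3 ((⊤ : ℕ∞) : WithTop ℕ∞) (fT v α θ) := by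
  have ht := tau_smooth h0 h1 hθ
  have he : ∀ β : ℝ, ContMDiff modelT3 (𝓡 1) ((⊤ : ℕ∞) : WithTop ℕ∞)
      (fun x : T3 => Circle.exp (β * tau α θ x.2.1 x.2.2)) := fun β =>
    contMDiff_circleExp.comp (ContMDiff.comp (g := fun t : ℝ => β * t)
      (contDiff_const.mul contDiff_id).contMDiff ht)
  have he1 := he 1
  simp only [one_mul] at he1
  unfold fT
  exact (contMDiff_fst.mul (he v)).prodMk (((contMDiff_fst.comp contMDiff_snd).mul he1).prodMk
    ((contMDiff_snd.comp contMDiff_snd).mul (he α)))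

def fD (v : ℝ) {α : ℝ} (h0 : 0 < α) (h1 : α < 1) {θ : ℝ} (hθ : |θ| < 1 / 48) :
    Diffeomorph modelT3 modelT3 T3 T3 (⊤ : ℕ∞) where
  toFun := fT v α θ
  invFun := fT v α (-θ)
  left_inv := fT_inv v h0 h1 hθ.le
  right_inv := fun x => by
    have := fT_inv v h0 h1 (θ := -θ) (by rw [abs_neg]; exact hθ.le) x
    rwa [neg_neg] at this
  contMDiff_toFun := fT_smooth v h0 h1 hθ
  contMDiff_invFun := fT_smooth v h0 h1 (by rwa [abs_neg])

lemma fD_coe (v : ℝ) {α : ℝ} (h0 : 0 < α) (h1 : α < 1) {θ : ℝ} (hθ : |θ| < 1 / 48) :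
    ⇑(fD v h0 h1 hθ) = fT v α θ := rfl

/-- time parameter -/
def thet (μ : ℝ) : ℝ := (max μ 49)⁻¹

lemma thet_pos (μ : ℝ) : 0 < thet μ := inv_pos.2 (lt_of_lt_of_le (by norm_num) (le_max_right _ _))
lemma thet_lt (μ : ℝ) : thet μ < 1 / 48 := by
  rw [thet, inv_eq_one_div]
  exact one_div_lt_one_div_of_lt (by norm_num) (lt_of_lt_of_le (by norm_num) (le_max_right _ _))
lemma thet_abs (μ : ℝ) : |thet μ| < 1 / 48 := by
  rw [abs_of_pos (thet_pos μ)]; exact thet_lt μ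

lemma thet_cont : Continuous thet := by
  unfold thet
  refine Continuous.inv₀ (by fun_prop) (fun μ => ?_)
  have := le_max_right μ 49
  intro h; rw [h] at this; norm_num at this

lemma fT_cont (v : ℝ) {α : ℝ} (h0 : 0 < α) (h1 : α < 1) :
    Continuous (fun p : ℝ × T3 => fT v α (thet p.1) p.2) := by
  have ht : Continuous (fun p : ℝ × T3 => tau α (thet p.1) p.2.2.1 p.2.2.2) := by
    rw [continuous_iff_continuousAt]
    intro p
    have hc : Continuous fun p : ℝ × T3 => (thet p.1, p.2.2.1, p.2.2.2) :=
      (thet_cont.comp continuous_fst).prodMk (by fun_prop)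
    exact ContinuousAt.comp (f := fun p : ℝ × T3 => (thet p.1, p.2.2.1, p.2.2.2))
      (g := fun x : ℝ × Circle × Circle => tau α x.1 x.2.1 x.2.2)
      (tau_contAt h0 h1 (thet_abs p.1) p.2.2.1 p.2.2.2) hc.continuousAt
  unfold fT
  fun_prop

lemma fT_iter_cont (v : ℝ) {α : ℝ} (h0 : 0 < α) (h1 : α < 1) (n : ℕ) :
    Continuous (fun p : ℝ × T3 => (fT v α (thet p.1))^[n] p.2) := by
  induction n with
  | zero => exact continuous_snd
  | succ n ih =>
    simp only [Function.iterate_succ', Function.comp]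
    exact (fT_cont v h0 h1).comp (continuous_fst.prodMk ih)

def NS (α y z : ℝ) : Prop := ∀ s, HH (y + s) (z + α * s) ≠ 0

def Tt (α y z s : ℝ) : ℝ := ∫ r in (0 : ℝ)..s, (HH (y + r) (z + α * r))⁻¹

lemma HH_cont (α y z : ℝ) : Continuous fun s => HH (y + s) (z + α * s) := by
  unfold HH; fun_prop

lemma Tt_deriv {α y z : ℝ} (h : NS α y z) (s : ℝ) :
    HasDerivAt (Tt α y z) (HH (y + s) (z + α * s))⁻¹ s := by
  have hc : Continuous fun r => (HH (y + r) (z + α * r))⁻¹ := (HH_cont α y z).inv₀ h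
  exact intervalIntegral.integral_hasDerivAt_right (hc.intervalIntegrable _ _)
      (hc.stronglyMeasurableAtFilter _ _) hc.continuousAt

lemma Tt_zero (α y z : ℝ) : Tt α y z 0 = 0 := by simp [Tt]

lemma HH_pos_of {α y z : ℝ} (h : NS α y z) (s : ℝ) : 0 < HH (y + s) (z + α * s) :=
  lt_of_le_of_ne (HH_nonneg _ _) (Ne.symm (h s))

/-- general lower bound for the time increments -/
lemma Tt_gap' {α y z : ℝ} (h : NS α y z) {s s' K : ℝ} (hK : 0 < K) (hs : s ≤ s')
    (hb : ∀ r ∈ Set.Icc s s', HH (y + r) (z + α * r) ≤ K) :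
    (s' - s) / K ≤ Tt α y z s' - Tt α y z s := by
  rcases hs.eq_or_lt with rfl | hs
  · simp
  obtain ⟨ξ, hξ, e⟩ := exists_hasDerivAt_eq_slope (Tt α y z) _ hs
    (fun t _ => (Tt_deriv h t).continuousAt.continuousWithinAt) (fun t _ => Tt_deriv h t)
  have h1 : (HH (y + ξ) (z + α * ξ))⁻¹ ≥ K⁻¹ :=
    inv_anti₀ (HH_pos_of h ξ) (hb ξ ⟨hξ.1.le, hξ.2.le⟩)
  rw [e, ge_iff_le, le_div_iff₀ (by linarith)] at h1
  rw [div_eq_inv_mul]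
  exact h1

lemma Tt_gap {α y z : ℝ} (h : NS α y z) {s s' : ℝ} (hs : s ≤ s') :
    (s' - s) / 16 ≤ Tt α y z s' - Tt α y z s :=
  Tt_gap' h (by norm_num) hs (fun _ _ => HH_le _ _)

lemma Tt_strictMono {α y z : ℝ} (h : NS α y z) : StrictMono (Tt α y z) := by
  intro s s' hs
  have := Tt_gap h hs.le
  linarith

/-- displacement of the orbit along the leaf -/
def sN (α θ y z : ℝ) : ℕ → ℝ
  | 0 => 0
  | n + 1 => sN α θ y z n +
      tau α θ (Circle.exp (y + sN α θ y z n)) (Circle.exp (z + α * sN α θ y z n))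

lemma orbit_eq (v α θ x y z : ℝ) (n : ℕ) : (fT v α θ)^[n] (EE (x, y, z)) =
    EE (x + v * sN α θ y z n, y + sN α θ y z n, z + α * sN α θ y z n) := by
  induction n with
  | zero => simp [sN]
  | succ n ih =>
    rw [Function.iterate_succ', Function.comp, ih, fT_EE, sN]
    congr 2
    · ring
    · congr 1 <;> ring

lemma Tt_sN {α y z : ℝ} (h0 : 0 < α) (h1 : α < 1) (h : NS α y z) {θ : ℝ} (hθ : |θ| ≤ 1 / 48)
    (n : ℕ) : Tt α y z (sN α θ y z n) = n * θ := by
  induction n with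
  | zero => simp [sN, Tt_zero]
  | succ n ih =>
    set s := sN α θ y z n with hs
    have key := tau_time h0 h1 hθ (y + s) (z + α * s)
      (fun r => by
        have := h (s + r)
        rwa [← add_assoc, mul_add, ← add_assoc] at this)
      (fun r => Tt α y z (s + r)) (fun r => by
        have := (Tt_deriv h (s + r)).comp_const_add s r
        rwa [← add_assoc, mul_add, ← add_assoc] at this)
    rw [sN, ← hs]
    simp only [add_zero] at key
    push_cast
    linarith

lemma sN_sum {α : ℝ} (h0 : 0 < α) (h1 : α < 1) {θ : ℝ} (hθ0 : 0 ≤ θ) (hθ : θ ≤ 1 / 48) (y z : ℝ)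
    (N : ℕ) : ∑ n ∈ Finset.range N, θ * HH (y + sN α θ y z n) (z + α * sN α θ y z n)
      ≤ 2 * sN α θ y z N := by
  induction N with
  | zero => simp [sN]
  | succ n ih =>
    rw [Finset.sum_range_succ, sN]
    have := (tau_ge h0 h1 hθ0 hθ (y + sN α θ y z n) (z + α * sN α θ y z n)).2
    linarith

lemma sN_mono {α : ℝ} (h0 : 0 < α) (h1 : α < 1) {θ : ℝ} (hθ0 : 0 ≤ θ) (hθ : θ ≤ 1 / 48) (y z : ℝ) :
    Monotone (sN α θ y z) := by
  apply monotone_nat_of_le_succ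
  intro n
  rw [sN]
  have := (tau_ge h0 h1 hθ0 hθ (y + sN α θ y z n) (z + α * sN α θ y z n)).1
  linarith

lemma sN_nonneg {α : ℝ} (h0 : 0 < α) (h1 : α < 1) {θ : ℝ} (hθ0 : 0 ≤ θ) (hθ : θ ≤ 1 / 48) (y z : ℝ)
    (n : ℕ) : 0 ≤ sN α θ y z n := by
  have := sN_mono h0 h1 hθ0 hθ y z (Nat.zero_le n)
  simpa [sN] using this

lemma exp_sub_int (x : ℝ) (m : ℤ) : Circle.exp (x - 2 * Real.pi * m) = Circle.exp x := by
  have h := Circle.periodic_exp.sub_zsmul_eq (x := x) m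
  rw [← h]
  congr 1
  simp
  ring

lemma exp_add_nat (x : ℝ) (k : ℕ) : Circle.exp (x + 2 * Real.pi * k) = Circle.exp x := by
  have h := exp_sub_int x (-(k : ℤ))
  push_cast at h
  rw [← h]
  congr 1
  ring

lemma approx_step {α : ℝ} {q : ℕ} {a : ℤ} {η : ℝ} (hq : 1 ≤ q) (hc : IsCoprime a (q : ℤ))
    (hη : 0 < η) (hα : α = a / q + η) (hηq : η * (q : ℝ) ^ 5 ≤ 1) (t : ℝ) :
    ∃ k : ℕ, q ≤ k ∧ ∃ m : ℤ, |t + α * k - m| ≤ 3 / q := by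
  obtain ⟨i, hi, m, hm⟩ := exists_residue hq hc ⌊(q : ℝ) * t⌋
  refine ⟨i + q, by omega, m + a, ?_⟩
  have hq0 : (1 : ℝ) ≤ q := by exact_mod_cast hq
  have hqp : (0 : ℝ) < q := by linarith
  have hi' : (i : ℝ) ≤ q := by exact_mod_cast hi.le
  have f1 := Int.floor_le ((q : ℝ) * t)
  have f2 := Int.lt_floor_add_one ((q : ℝ) * t)
  have hm' : ((⌊(q : ℝ) * t⌋ : ℤ) : ℝ) + i * a = m * q := by exact_mod_cast hm
  generalize ((⌊(q : ℝ) * t⌋ : ℤ) : ℝ) = c at *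
  have e : t + α * ((i + q : ℕ) : ℝ) - ((m + a : ℤ) : ℝ)
      = (q * t - c) / q + η * (i + q) := by
    rw [hα]; push_cast; field_simp
    linear_combination hm'
  rw [e]
  have g1 : 0 ≤ (q * t - c) / q := by apply div_nonneg <;> linarith
  have g2 : (q * t - c) / q ≤ 1 / q := by
    apply div_le_div_of_nonneg_right <;> linarith
  have g3 : 0 ≤ η * (i + q) := by positivity
  have g4 : η * (i + q) ≤ 2 / q := by
    rw [le_div_iff₀ hqp]
    have : η * (q : ℝ) ^ 2 ≤ η * (q : ℝ) ^ 5 :=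
      mul_le_mul_of_nonneg_left (pow_le_pow_right₀ hq0 (by norm_num)) hη.le
    have : η * (i + q) * q ≤ η * (q + q) * q := by gcongr
    nlinarith
  rw [abs_of_nonneg (by positivity)]
  have : (3 : ℝ) / q = 1 / q + 2 / q := by ring
  linarith

lemma leaf_ae {α : ℝ} {q : ℕ → ℕ} {a : ℕ → ℤ} {η : ℕ → ℝ}
    (hqt : Tendsto (fun n => (q n : ℝ)) atTop atTop)
    (hd : ∀ n, Odd (q n) ∧ 1 ≤ q n ∧ IsCoprime (a n) (q n : ℤ) ∧ 0 < η n ∧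
      α = a n / q n + η n ∧ η n * (q n : ℝ) ^ 5 ≤ 1) (U : Set T3) (hU : IsOpen U)
    (hne : U.Nonempty) :
    ∀ᵐ v : ℝ, ∀ B : ℝ, ∃ s, B ≤ s ∧ EE (v * s, s, α * s) ∈ U := by
  obtain ⟨u, hu⟩ := hne
  obtain ⟨⟨x, y, z⟩, rfl⟩ := EE_surj u
  have hpi := Real.pi_pos
  have hn : {p : ℝ × ℝ | EE (p.1, y, p.2) ∈ U} ∈ 𝓝 (x, z) := by
    have hc : Continuous fun p : ℝ × ℝ => EE (p.1, y, p.2) := EE_continuous.comp (by fun_prop)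
    exact (hU.preimage hc).mem_nhds hu
  obtain ⟨ε, hε, hball⟩ := Metric.mem_nhds_iff.1 hn
  choose k hk m hm using fun n => approx_step (hd n).2.1 (hd n).2.2.1 (hd n).2.2.2.1
    (hd n).2.2.2.2.1 (hd n).2.2.2.2.2 ((α * y - z) / (2 * Real.pi))
  set s : ℕ → ℝ := fun n => y + 2 * Real.pi * k n with hs
  have hst : Tendsto s atTop atTop := by
    have : Tendsto (fun n => (k n : ℝ)) atTop atTop :=
      tendsto_atTop_mono (fun n => by exact_mod_cast hk n) hqt
    exact tendsto_atTop_add_const_left _ _ (this.const_mul_atTop (by positivity))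
  have hl : Tendsto (fun n => s n / (2 * Real.pi)) atTop atTop :=
    hst.atTop_div_const (by positivity)
  have herr : Tendsto (fun n => 2 * Real.pi * (3 / (q n : ℝ))) atTop (𝓝 0) := by
    have := (hqt.const_div_atTop 3).const_mul (2 * Real.pi)
    simpa using this
  have hev : ∀ᶠ n in atTop, 2 * Real.pi * (3 / (q n : ℝ)) < ε := herr.eventually (gt_mem_nhds hε)
  have hab : (x - ε) / (2 * Real.pi) < (x + ε) / (2 * Real.pi) := by
    apply div_lt_div_of_pos_right <;> linarith
  filter_upwards [metric_lemma _ hl hab] with v hv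
  intro B
  obtain ⟨n, hn⟩ := (hev.and (hst.eventually_ge_atTop B)).exists_forall_of_atTop
  obtain ⟨j, hj, M, hM1, hM2⟩ := hv n
  obtain ⟨e1, e2⟩ := hn j hj
  refine ⟨s j, e2, ?_⟩
  rw [div_lt_iff₀ (by positivity)] at hM1
  rw [lt_div_iff₀ (by positivity)] at hM2
  have e3 : (s j / (2 * Real.pi) * v - M) * (2 * Real.pi) = v * s j - 2 * Real.pi * M := by
    field_simp
  rw [e3] at hM1 hM2
  have key : EE (v * s j - 2 * Real.pi * M, y, α * s j - 2 * Real.pi * m j) ∈ U := by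
    apply hball (a := (v * s j - 2 * Real.pi * M, α * s j - 2 * Real.pi * m j))
    rw [Metric.mem_ball, Prod.dist_eq, max_lt_iff]
    constructor
    · rw [Real.dist_eq, abs_lt]; constructor <;> linarith
    · rw [Real.dist_eq]
      have e4 : α * s j - 2 * Real.pi * m j - z =
        2 * Real.pi * ((α * y - z) / (2 * Real.pi) + α * k j - m j) := by
        rw [hs]; field_simp; ring
      simp only
      rw [e4, abs_mul, abs_of_pos (by positivity : 0 < 2 * Real.pi)]
      refine lt_of_le_of_lt ?_ e1
      exact mul_le_mul_of_nonneg_left (hm j) (by positivity)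
  have : EE (v * s j, s j, α * s j) =
      EE (v * s j - 2 * Real.pi * M, y, α * s j - 2 * Real.pi * m j) := by
    unfold EE
    simp only [exp_sub_int]
    rw [hs]
    simp only [exp_add_nat]
  rw [this]; exact key

lemma leaf_dense {α : ℝ} {q : ℕ → ℕ} {a : ℕ → ℤ} {η : ℕ → ℝ}
    (hqt : Tendsto (fun n => (q n : ℝ)) atTop atTop)
    (hd : ∀ n, Odd (q n) ∧ 1 ≤ q n ∧ IsCoprime (a n) (q n : ℤ) ∧ 0 < η n ∧
      α = a n / q n + η n ∧ η n * (q n : ℝ) ^ 5 ≤ 1) :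
    ∃ v : ℝ, ∀ U : Set T3, IsOpen U → U.Nonempty → ∀ x y z B : ℝ,
      ∃ s, B ≤ s ∧ EE (x + v * s, y + s, z + α * s) ∈ U := by
  have h : ∀ᵐ v : ℝ, ∀ U ∈ TopologicalSpace.countableBasis T3, ∀ B : ℝ,
      ∃ s, B ≤ s ∧ EE (v * s, s, α * s) ∈ U := by
    rw [ae_ball_iff (TopologicalSpace.countable_countableBasis T3)]
    intro U hU
    exact leaf_ae hqt hd U (TopologicalSpace.isOpen_of_mem_countableBasis hU)
      (TopologicalSpace.nonempty_of_mem_countableBasis hU)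
  obtain ⟨v, hv⟩ := h.exists
  refine ⟨v, fun U hU hne x y z B => ?_⟩
  have hV : IsOpen ((fun p : T3 => EE (x, y, z) * p) ⁻¹' U) := hU.preimage (by fun_prop)
  obtain ⟨u, hu⟩ := hne
  obtain ⟨V, hVb, _, hVU⟩ := (TopologicalSpace.isBasis_countableBasis T3).exists_subset_of_mem_open
    (a := (EE (x, y, z))⁻¹ * u) (by simpa using hu) hV
  obtain ⟨s, hs, hsV⟩ := hv V hVb B
  refine ⟨s, hs, ?_⟩
  have := hVU hsV
  rw [Set.mem_preimage, ← EE_add] at this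
  exact this

lemma haar3 : (volume : Measure (ℝ × ℝ × ℝ)).IsAddHaarMeasure := by
  have : (volume : Measure (ℝ × ℝ)).IsAddHaarMeasure :=
    Measure.prod.instIsAddHaarMeasure (volume : Measure ℝ) (volume : Measure ℝ)
  exact Measure.prod.instIsAddHaarMeasure (volume : Measure ℝ) (volume : Measure (ℝ × ℝ))

lemma ae_zeta (α : ℝ) {P : ℝ → Prop} (h : ∀ᵐ t : ℝ, P t) :
    ∀ᵐ w : ℝ × ℝ × ℝ, P (w.2.2 - α * w.2.1) := by
  have hn : volume {t | ¬ P t} = 0 := h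
  obtain ⟨N, hN, hNm, hN0⟩ := exists_measurable_superset_of_null hn
  let L : ℝ × ℝ × ℝ →ₗ[ℝ] ℝ :=
    { toFun := fun w => w.2.2 - α * w.2.1
      map_add' := fun a b => by simp; ring
      map_smul' := fun r a => by simp; ring }
  have hs : Function.Surjective L := fun t => ⟨(0, 0, t), by simp [L]⟩
  have h1 : ∀ᵐ t : ℝ, t ∈ Nᶜ := measure_eq_zero_iff_ae_notMem.1 hN0
  have := haar3
  have h2 := (ae_comp_linearMap_mem_iff L (volume : Measure (ℝ × ℝ × ℝ)) volume hs hNm.compl).2 h1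
  filter_upwards [h2] with w hw
  by_contra hc
  exact hw (hN hc)

lemma HH_zero {y z : ℝ} (h : HH y z = 0) : ∃ k m : ℤ, y = 2 * Real.pi * k ∧ z = Real.pi * m := by
  unfold HH at h
  have h' := pow_eq_zero_iff (two_ne_zero) |>.1 h
  have a1 := Real.cos_le_one y
  have a2 := Real.cos_le_one (2 * z)
  obtain ⟨k, hk⟩ := (Real.cos_eq_one_iff y).1 (by linarith)
  obtain ⟨m, hm⟩ := (Real.cos_eq_one_iff (2 * z)).1 (by linarith)
  exact ⟨k, m, by linarith, by linarith⟩

lemma ae_NS (α : ℝ) : ∀ᵐ w : ℝ × ℝ × ℝ, NS α w.2.1 w.2.2 := by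
  set C : Set ℝ := Set.range fun p : ℤ × ℤ => Real.pi * p.2 - α * (2 * Real.pi * p.1) with hC
  have h1 : ∀ᵐ t : ℝ, t ∉ C := measure_eq_zero_iff_ae_notMem.1 ((Set.countable_range _).measure_zero _)
  filter_upwards [ae_zeta α h1] with w hw
  intro s hs
  obtain ⟨k, m, e1, e2⟩ := HH_zero hs
  apply hw
  refine ⟨(k, m), ?_⟩
  simp only
  rw [← e1, ← e2]
  ring

lemma orbit_hits {v α : ℝ} (h0 : 0 < α) (h1 : α < 1)
    (hv : ∀ U : Set T3, IsOpen U → U.Nonempty → ∀ x y z B : ℝ,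
      ∃ s, B ≤ s ∧ EE (x + v * s, y + s, z + α * s) ∈ U)
    (U : Set T3) (hU : IsOpen U) (hne : U.Nonempty) (x y z : ℝ) (hns : NS α y z) :
    ∀ᵐ μ : ℝ, 49 < μ → ∃ n : ℕ, (fT v α (thet μ))^[n] (EE (x, y, z)) ∈ U := by
  obtain ⟨u, hu⟩ := hne
  have hc : Continuous fun p : T3 × ℝ => p.1 * EE (v * p.2, p.2, α * p.2) :=
    continuous_fst.mul (EE_continuous.comp (by fun_prop))
  have hn : {p : T3 × ℝ | p.1 * EE (v * p.2, p.2, α * p.2) ∈ U} ∈ 𝓝 (u, (0 : ℝ)) := by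
    apply (hU.preimage hc).mem_nhds
    have : EE (v * 0, 0, α * 0) = 1 := by simp [EE]
    simp only [Set.mem_preimage, this, mul_one]
    exact hu
  obtain ⟨V, hV, W, hW, hVW⟩ := mem_nhds_prod_iff.1 hn
  obtain ⟨V', hV', hVo, huV⟩ := mem_nhds_iff.1 hV
  obtain ⟨c, hcp, hcW⟩ := Metric.mem_nhds_iff.1 hW
  choose s hs hsV using fun j : ℕ => hv V' hVo ⟨u, huV⟩ x y z (j : ℝ)
  have htt : Tendsto (fun j => Tt α y z (s j)) atTop atTop := by
    refine tendsto_atTop_mono (f := fun j : ℕ => (j : ℝ) / 16) (fun j => ?_)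
      (tendsto_natCast_atTop_atTop.atTop_div_const (by norm_num))
    have := Tt_gap hns (s := 0) (s' := s j) ((Nat.cast_nonneg j).trans (hs j))
    rw [Tt_zero] at this
    have := hs j
    linarith
  filter_upwards [metric_lemma _ htt (by linarith : -(49 * (c / 16)) < (0 : ℝ))] with μ hμ h49
  obtain ⟨j, _, m, hm1, hm2⟩ := hμ 0
  have hsj : 0 ≤ s j := (Nat.cast_nonneg j).trans (hs j)
  have ht0 : 0 ≤ Tt α y z (s j) := by
    have := Tt_gap hns hsj
    rw [Tt_zero] at this
    linarith
  have hm0 : (0 : ℝ) < m := by nlinarith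
  obtain ⟨n, rfl⟩ := Int.eq_ofNat_of_zero_le (by exact_mod_cast hm0.le : (0 : ℤ) ≤ m)
  refine ⟨n, ?_⟩
  have hth : thet μ = μ⁻¹ := by rw [thet, max_eq_left h49.le]
  have hT := Tt_sN h0 h1 hns (thet_abs μ).le n
  rw [orbit_eq]
  set r := sN α (thet μ) y z n with hr
  simp only [Int.cast_natCast] at hm0 hm1 hm2
  have hμp : 0 < μ := by linarith
  have k1 : Tt α y z (s j) < Tt α y z r := by
    rw [hT, hth, ← div_eq_mul_inv, lt_div_iff₀ hμp]; linarith
  have k2 : s j < r := (Tt_strictMono hns).lt_iff_lt.1 k1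
  have k3 := Tt_gap hns k2.le
  have k4 : Tt α y z r < Tt α y z (s j) + c / 16 := by
    rw [hT, hth, ← div_eq_mul_inv, div_lt_iff₀ hμp]
    nlinarith
  have k5 : r - s j < c := by linarith
  have hmem : (EE (x + v * s j, y + s j, z + α * s j), r - s j) ∈ V ×ˢ W := by
    refine ⟨hV' (hsV j), hcW ?_⟩
    rw [Metric.mem_ball, Real.dist_eq, sub_zero, abs_of_nonneg (by linarith)]
    exact k5
  have := hVW hmem
  simp only [Set.mem_ofPred_eq] at this
  rw [← EE_add] at this
  convert this using 2
  simp only [Prod.mk_add_mk]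
  congr 1
  · ring
  · congr 1 <;> ring

lemma good_mu {v α : ℝ} (h0 : 0 < α) (h1 : α < 1)
    (hv : ∀ U : Set T3, IsOpen U → U.Nonempty → ∀ x y z B : ℝ,
      ∃ s, B ≤ s ∧ EE (x + v * s, y + s, z + α * s) ∈ U) :
    ∃ μ : ℝ, ∀ᵐ w : ℝ × ℝ × ℝ, ∀ U ∈ TopologicalSpace.countableBasis T3,
      ∃ n : ℕ, (fT v α (thet μ))^[n] (EE w) ∈ U := by
  have key : ∀ᵐ μ : ℝ, ∀ U ∈ TopologicalSpace.countableBasis T3,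
      ∀ᵐ w : ℝ × ℝ × ℝ, 49 < μ → ∃ n : ℕ, (fT v α (thet μ))^[n] (EE w) ∈ U := by
    rw [ae_ball_iff (TopologicalSpace.countable_countableBasis T3)]
    intro U hUb
    have hU := TopologicalSpace.isOpen_of_mem_countableBasis hUb
    have hne := TopologicalSpace.nonempty_of_mem_countableBasis hUb
    rw [← Measure.ae_ae_comm]
    · filter_upwards [ae_NS α] with w hw
      exact orbit_hits h0 h1 hv U hU hne w.1 w.2.1 w.2.2 hw
    · have : {p : (ℝ × ℝ × ℝ) × ℝ | 49 < p.2 → ∃ n : ℕ, (fT v α (thet p.2))^[n] (EE p.1) ∈ U} =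
        (Prod.snd ⁻¹' Set.Ioi 49)ᶜ ∪
          ⋃ n : ℕ, {p : (ℝ × ℝ × ℝ) × ℝ | (fT v α (thet p.2))^[n] (EE p.1) ∈ U} := by
        ext p
        simp [imp_iff_not_or]
      rw [this]
      refine MeasurableSet.union (measurable_snd measurableSet_Ioi).compl
        (MeasurableSet.iUnion fun n => ?_)
      have hc : Continuous fun p : (ℝ × ℝ × ℝ) × ℝ => (fT v α (thet p.2))^[n] (EE p.1) :=
        Continuous.comp (g := fun p : ℝ × T3 => (fT v α (thet p.1))^[n] p.2)
          (f := fun p : (ℝ × ℝ × ℝ) × ℝ => (p.2, EE p.1)) (fT_iter_cont v h0 h1 n)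
          (continuous_snd.prodMk (EE_continuous.comp continuous_fst))
      exact (hU.preimage hc).measurableSet
  have hfr : ∃ᶠ μ in ae (volume : Measure ℝ), 49 < μ := by
    rw [frequently_ae_iff]
    have : volume (Set.Ioi (49 : ℝ)) ≠ 0 := by simp
    exact this
  obtain ⟨μ, h49, hμ⟩ := (hfr.and_eventually key).exists
  refine ⟨μ, ?_⟩
  rw [ae_ball_iff (TopologicalSpace.countable_countableBasis T3)]
  intro U hU
  filter_upwards [hμ U hU] with w hw using hw h49

lemma transfer {Q : Set T3} (hQ : MeasurableSet Q) (h : ∀ᵐ w : ℝ × ℝ × ℝ, EE w ∈ Q) :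
    ∀ᵐ x ∂LebT3, x ∈ Q := by
  have h1 : ∀ x : T3, ∀ᵐ w : ℝ × ℝ × ℝ, EE w * x ∈ Q := by
    intro x
    obtain ⟨u, rfl⟩ := EE_surj x
    have := haar3
    have := (measurePreserving_add_right (volume : Measure (ℝ × ℝ × ℝ)) u).quasiMeasurePreserving.ae h
    filter_upwards [this] with w hw
    rwa [← EE_add]
  have hc : Continuous fun p : T3 × (ℝ × ℝ × ℝ) => EE p.2 * p.1 :=
    (EE_continuous.comp continuous_snd).mul continuous_fst
  have h2 : ∀ᵐ x ∂LebT3, ∀ᵐ w : ℝ × ℝ × ℝ, EE w * x ∈ Q := Eventually.of_forall h1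
  have h3 := (Measure.ae_ae_comm (p := fun (x : T3) (w : ℝ × ℝ × ℝ) => EE w * x ∈ Q)
    (hc.measurable hQ)).1 h2
  obtain ⟨w, hw⟩ := h3.exists
  have := (measurePreserving_mul_left LebT3 (EE w)⁻¹).quasiMeasurePreserving.ae hw
  filter_upwards [this] with x hx
  simpa using hx

lemma abs_int_half (p : ℤ) {e : ℝ} (h1 : -(3 / 8) ≤ e) (h2 : e ≤ 3 / 8) :
    1 / 8 ≤ |(p : ℝ) - 1 / 2 + e| := by
  rcases le_or_gt p 0 with hp | hp
  · have : (p : ℝ) ≤ 0 := by exact_mod_cast hp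
    rw [abs_of_nonpos (by linarith)]; linarith
  · have : (1 : ℝ) ≤ p := by exact_mod_cast hp
    rw [abs_of_nonneg (by linarith)]; linarith

lemma sq_aux (s r : ℝ) : (s + r) ^ 2 ≤ 2 * r ^ 2 + 8 * s ^ 2 := by
  nlinarith [sq_nonneg (s - r), sq_nonneg s]

set_option maxHeartbeats 800000 in
lemma pointwise {α : ℝ} (h0 : 0 < α) (h1 : α < 1) {q : ℕ} {a : ℤ} {η : ℝ} (hodd : Odd q)
    (hη : 0 < η) (hα : α = a / q + η) {Y Z t : ℝ} (hZ : Z = 2 * Real.pi * t + α * Y)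
    {c : ℤ} (hc1 : -(3 / 8) < q * t - c) (hc2 : q * t - c < -(1 / 8))
    {k : ℤ} (hk0 : 0 ≤ k) (hk : k * (q * η) ≤ 1 / 2) (hY : |Y - 2 * Real.pi * k| ≤ Real.pi) :
    1 - Real.cos Z ≤ 1 / q + 512 * (q : ℝ) ^ 4 * HH Y Z := by
  have hpi := Real.pi_pos
  have hq1 : 1 ≤ q := hodd.pos
  have hq : (1 : ℝ) ≤ q := by exact_mod_cast hq1
  have hq0 : (0 : ℝ) < q := by linarith
  have hk0' : (0 : ℝ) ≤ k := by exact_mod_cast hk0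
  unfold HH
  set A := 2 - Real.cos Y - Real.cos (2 * Z) with hA
  have cY := Real.cos_le_one Y
  have cZ := Real.cos_le_one Z
  have cZ' := Real.neg_one_le_cos Z
  have c2Z : Real.cos (2 * Z) = 2 * Real.cos Z ^ 2 - 1 := Real.cos_two_mul Z
  rcases le_or_gt 0 (Real.cos Z) with hpos | hneg
  · have e1 : 1 - Real.cos Z ≤ A / 2 := by rw [hA, c2Z]; nlinarith
    have e2 : A / 2 ≤ 1 / q + q * A ^ 2 := by
      have : 0 ≤ (1 - q * A / 2) ^ 2 := sq_nonneg _
      have e3 : 1 / q + q * A ^ 2 - A / 2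
          = ((1 - q * A / 2) ^ 2 + q * A / 2 + 3 / 4 * (q * A) ^ 2) / q := by
        field_simp; ring
      have hA0 : 0 ≤ A := by rw [hA]; have := Real.cos_le_one (2 * Z); linarith
      have : 0 ≤ 1 / q + q * A ^ 2 - A / 2 := by rw [e3]; positivity
      linarith
    have e4 : (q : ℝ) * A ^ 2 ≤ 512 * (q : ℝ) ^ 4 * A ^ 2 := by
      have : (q : ℝ) ≤ (q : ℝ) ^ 4 := le_self_pow₀ hq (by norm_num)
      apply mul_le_mul_of_nonneg_right _ (sq_nonneg _)
      linarith
    linarith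
  · set m : ℤ := round ((Z - Real.pi) / (2 * Real.pi)) with hm
    set σ := Z - Real.pi - 2 * Real.pi * m with hσ
    set ρ := Y - 2 * Real.pi * k with hρ
    have hσ1 : |σ| ≤ Real.pi := by
      have := abs_sub_round ((Z - Real.pi) / (2 * Real.pi))
      rw [← hm] at this
      have e : σ = 2 * Real.pi * ((Z - Real.pi) / (2 * Real.pi) - m) := by rw [hσ]; field_simp
      rw [e, abs_mul, abs_of_pos (by positivity : 0 < 2 * Real.pi)]
      nlinarith
    have hcs : Real.cos Z = - Real.cos σ := by
      have : Z = (σ + m * (2 * Real.pi)) + Real.pi := by rw [hσ]; ring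
      rw [this, Real.cos_add_pi, Real.cos_add_int_mul_two_pi]
    have hσ2 : |σ| ≤ Real.pi / 2 := by
      by_contra hcon
      push Not at hcon
      have : Real.cos |σ| ≤ 0 := Real.cos_nonpos_of_pi_div_two_le_of_le hcon.le (by linarith)
      rw [Real.cos_abs] at this
      linarith
    have u1 := Real.cos_le_one_sub_mul_cos_sq hY
    have hcY : Real.cos Y = Real.cos ρ := by
      have : Y = ρ + k * (2 * Real.pi) := by rw [hρ]; ring
      rw [this, Real.cos_add_int_mul_two_pi]
    have u2 := Real.cos_le_one_sub_mul_cos_sq (x := 2 * σ) (by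
      rw [abs_mul, abs_of_pos (by norm_num : (0 : ℝ) < 2)]; linarith)
    have hc2 : Real.cos (2 * Z) = Real.cos (2 * σ) := by
      rw [c2Z, hcs, Real.cos_two_mul]; ring
    obtain ⟨p, hp⟩ := hodd
    have hp' : (q : ℝ) = 2 * p + 1 := by exact_mod_cast hp
    have lin : σ - α * ρ = 2 * Real.pi / q * (((c + k * a - p - m * q : ℤ) : ℝ) - 1 / 2 +
        (q * t - c + k * (q * η))) := by
      rw [hσ, hρ, hZ]
      push_cast
      have : (p : ℝ) = (q - 1) / 2 := by linarith
      rw [this, hα]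
      field_simp
      ring
    have hkq : 0 ≤ k * (q * η) := by positivity
    have lb := abs_int_half (c + k * a - p - m * q) (e := q * t - c + k * (q * η))
      (by linarith) (by linarith)
    have lb2 : Real.pi / (4 * q) ≤ |σ - α * ρ| := by
      rw [lin, abs_mul, abs_of_pos (by positivity)]
      calc Real.pi / (4 * q) = 2 * Real.pi / q * (1 / 8) := by field_simp; norm_num
        _ ≤ _ := mul_le_mul_of_nonneg_left lb (by positivity)
    have lb3 : Real.pi / (4 * q) ≤ |σ| + |ρ| := by
      refine lb2.trans ((abs_sub _ _).trans ?_)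
      rw [abs_mul, abs_of_pos h0]
      nlinarith [abs_nonneg ρ]
    have lb4 : (Real.pi / (4 * q)) ^ 2 ≤ (|σ| + |ρ|) ^ 2 := by
      apply pow_le_pow_left₀ (by positivity) lb3
    have lb5 : (|σ| + |ρ|) ^ 2 ≤ 2 * ρ ^ 2 + 8 * σ ^ 2 := by
      rw [← sq_abs σ, ← sq_abs ρ]
      exact sq_aux _ _
    have lb6 : 1 / (16 * (q : ℝ) ^ 2) ≤ A := by
      have e1 : (2 * ρ ^ 2 + 8 * σ ^ 2) / Real.pi ^ 2 ≤ A := by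
        have : (2 * ρ ^ 2 + 8 * σ ^ 2) / Real.pi ^ 2
          = 2 / Real.pi ^ 2 * ρ ^ 2 + 2 / Real.pi ^ 2 * (2 * σ) ^ 2 := by ring
        rw [this, hA, hcY, hc2]
        linarith
      refine le_trans ?_ e1
      rw [le_div_iff₀ (by positivity)]
      refine le_trans (le_of_eq ?_) (lb4.trans lb5)
      field_simp
      norm_num
    have lb7 : (1 / (16 * (q : ℝ) ^ 2)) ^ 2 ≤ A ^ 2 := pow_le_pow_left₀ (by positivity) lb6 2
    have lb8 : 2 ≤ 512 * (q : ℝ) ^ 4 * A ^ 2 := by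
      calc (2 : ℝ) = 512 * (q : ℝ) ^ 4 * (1 / (16 * (q : ℝ) ^ 2)) ^ 2 := by field_simp; norm_num
        _ ≤ _ := mul_le_mul_of_nonneg_left lb7 (by positivity)
    have : (0 : ℝ) < 1 / q := by positivity
    linarith

lemma kstar {α : ℝ} {q : ℕ} {a : ℤ} {η : ℝ} (hq3 : 3 ≤ q) (hco : IsCoprime a (q : ℤ))
    (hη : 0 < η) (hα : α = a / q + η) (hηq : η * (q : ℝ) ^ 5 ≤ 1) {t : ℝ}
    {c : ℤ} (hc1 : -(3 / 8) < q * t - c) (hc2 : q * t - c < -(1 / 8)) :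
    ∃ k : ℕ, 1 ≤ k ∧ k * (q * η) ≤ 1 / 2 ∧ ∃ m : ℤ, |t + k * α - m| ≤ q * η := by
  obtain ⟨i, hi, m, hm⟩ := exists_residue (by omega) hco c
  have hq : (3 : ℝ) ≤ q := by exact_mod_cast hq3
  have hq0 : (0 : ℝ) < q := by linarith
  have hi' : (i : ℝ) ≤ q := by exact_mod_cast hi.le
  have hm' : (c : ℝ) + i * a = m * q := by exact_mod_cast hm
  set X := q * η with hX
  have hX0 : 0 < X := by positivity
  have hXq : X * (q : ℝ) ^ 4 ≤ 1 := by rw [hX]; linarith [hηq, (by ring : q * η * (q:ℝ) ^ 4 = η * (q : ℝ) ^ 5)]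
  have hXq2 : X * (8 * q) ≤ 1 := by
    have : 8 * (q : ℝ) ≤ (q : ℝ) ^ 4 := by nlinarith [pow_le_pow_left₀ (by norm_num) hq 3]
    exact (mul_le_mul_of_nonneg_left this hX0.le).trans hXq
  set u := c - q * t with hu
  have hx : (i : ℝ) ≤ u / X := by
    rw [le_div_iff₀ hX0]; nlinarith
  set j := ⌈(u / X - i) / q⌉₊ with hj
  have j1 : (u / X - i) / q ≤ j := Nat.le_ceil _
  have j2 : (j : ℝ) < (u / X - i) / q + 1 :=
    Nat.ceil_lt_add_one (div_nonneg (by linarith) hq0.le)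
  rw [div_le_iff₀ hq0] at j1
  have j2' : (j : ℝ) * q < (u / X - i) + q := by
    have := mul_lt_mul_of_pos_right j2 hq0
    rwa [add_mul, div_mul_cancel₀ _ hq0.ne', one_mul] at this
  have k1 : u ≤ ((i : ℝ) + j * q) * X := by
    have : u / X ≤ i + j * q := by linarith
    rwa [div_le_iff₀ hX0] at this
  have k2 : ((i : ℝ) + j * q) * X ≤ u + q * X := by
    have : (i : ℝ) + j * q ≤ u / X + q := by linarith
    calc _ ≤ (u / X + q) * X := mul_le_mul_of_nonneg_right this hX0.le
      _ = _ := by field_simp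
  refine ⟨i + j * q, ?_, ?_, m + j * a, ?_⟩
  · by_contra hcon
    have : i + j * q = 0 := by omega
    have h' : (i : ℝ) + j * q = 0 := by exact_mod_cast this
    rw [h'] at k1
    linarith
  · push_cast
    linarith
  · have e : t + ((i + j * q : ℕ) : ℝ) * α - ((m + j * a : ℤ) : ℝ)
        = (((i : ℝ) + j * q) * X - u) / q := by
      rw [hα, hu, hX]; push_cast; field_simp
      linear_combination hm'
    rw [e, abs_div, abs_of_pos hq0, abs_of_nonneg (by linarith), div_le_iff₀ hq0]
    linarith

lemma numeric {q X T S : ℝ} (hq : 3 ≤ q) (hX : 0 < X) (hXq : X * q ^ 4 ≤ 1) (hSX : S * X ≤ 4)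
    (hT : 1 ≤ T * (21000 * X ^ 3)) :
    8 * q ≤ T ∧ 2048 * q ^ 5 * S ≤ 400000000 * T := by
  have hq0 : 0 < q := by linarith
  have hT0 : 0 < T := by
    by_contra hcon
    push Not at hcon
    have : T * (21000 * X ^ 3) ≤ 0 := mul_nonpos_of_nonpos_of_nonneg hcon (by positivity)
    linarith
  constructor
  · have h1 : X ^ 3 * q ^ 12 ≤ 1 := by
      have : (X * q ^ 4) ^ 3 ≤ 1 := pow_le_one₀ (by positivity) hXq
      calc _ = (X * q ^ 4) ^ 3 := by ring
        _ ≤ 1 := this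
    have h2 : (3 : ℝ) ^ 11 ≤ q ^ 11 := pow_le_pow_left₀ (by norm_num) hq 11
    have h3 : q ^ 12 ≤ T * 21000 := by
      calc q ^ 12 = q ^ 12 * 1 := by ring
        _ ≤ q ^ 12 * (T * (21000 * X ^ 3)) := mul_le_mul_of_nonneg_left hT (by positivity)
        _ = T * 21000 * (X ^ 3 * q ^ 12) := by ring
        _ ≤ T * 21000 * 1 := mul_le_mul_of_nonneg_left h1 (by positivity)
        _ = _ := by ring
    have h4 : q * 3 ^ 11 ≤ q ^ 12 := by
      calc q * 3 ^ 11 ≤ q * q ^ 11 := mul_le_mul_of_nonneg_left h2 hq0.le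
        _ = _ := by ring
    norm_num at h4
    linarith
  · have h1 : X ^ 2 * q ^ 5 ≤ 1 := by
      have a : (X * q ^ 4) ^ 2 ≤ 1 := pow_le_one₀ (by positivity) hXq
      have b : q ^ 5 ≤ q ^ 8 := pow_le_pow_right₀ (by linarith) (by norm_num)
      calc X ^ 2 * q ^ 5 ≤ X ^ 2 * q ^ 8 := mul_le_mul_of_nonneg_left b (by positivity)
        _ = (X * q ^ 4) ^ 2 := by ring
        _ ≤ 1 := a
    have h2 : q ^ 5 * X * (S * X) ≤ q ^ 5 * X * 4 := mul_le_mul_of_nonneg_left hSX (by positivity)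
    have h3 : (q ^ 5 * S) * X ^ 2 ≤ (84000 * T) * X ^ 2 := by
      calc (q ^ 5 * S) * X ^ 2 = q ^ 5 * X * (S * X) := by ring
        _ ≤ q ^ 5 * X * 4 := h2
        _ = 4 * q ^ 5 * X * 1 := by ring
        _ ≤ 4 * q ^ 5 * X * (T * (21000 * X ^ 3)) := mul_le_mul_of_nonneg_left hT (by positivity)
        _ = (84000 * T * X ^ 2) * (X ^ 2 * q ^ 5) := by ring
        _ ≤ (84000 * T * X ^ 2) * 1 := mul_le_mul_of_nonneg_left h1 (by positivity)
        _ = _ := by ring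
    have h4 := le_of_mul_le_mul_right h3 (by positivity)
    linarith

lemma HH_near {δ Y Z : ℝ} {k m : ℤ} (h1 : |Y - 2 * Real.pi * k| ≤ δ)
    (h2 : |Z - 2 * Real.pi * m| ≤ 2 * δ) : HH Y Z ≤ 81 * δ ^ 4 := by
  have eY : Real.cos Y = Real.cos (Y - 2 * Real.pi * k) := by
    rw [← Real.cos_sub_int_mul_two_pi Y k]; congr 1; ring
  have eZ : Real.cos (2 * Z) = Real.cos (2 * (Z - 2 * Real.pi * m)) := by
    rw [← Real.cos_sub_int_mul_two_pi (2 * Z) (2 * m)]; congr 1; push_cast; ring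
  have a1 := Real.one_sub_sq_div_two_le_cos (x := Y - 2 * Real.pi * k)
  have a2 := Real.one_sub_sq_div_two_le_cos (x := 2 * (Z - 2 * Real.pi * m))
  have b1 : (Y - 2 * Real.pi * k) ^ 2 ≤ δ ^ 2 := sq_le_sq' (abs_le.1 h1).1 (abs_le.1 h1).2
  have b2 : (Z - 2 * Real.pi * m) ^ 2 ≤ (2 * δ) ^ 2 := sq_le_sq' (by linarith [(abs_le.1 h2).1]) (abs_le.1 h2).2
  unfold HH
  have c1 := Real.cos_le_one Y
  have c2 := Real.cos_le_one (2 * Z)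
  have : 2 - Real.cos Y - Real.cos (2 * Z) ≤ 9 * δ ^ 2 := by
    rw [eY, eZ]; nlinarith
  calc _ ≤ (9 * δ ^ 2) ^ 2 := pow_le_pow_left₀ (by linarith) this 2
    _ = _ := by ring

set_option maxHeartbeats 800000 in
lemma core {α : ℝ} (h0 : 0 < α) (h1 : α < 1) {q : ℕ} {a : ℤ} {η : ℝ} (hodd : Odd q) (hq3 : 3 ≤ q)
    (hco : IsCoprime a (q : ℤ))
    (hη : 0 < η) (hα : α = a / q + η) (hηq : η * (q : ℝ) ^ 5 ≤ 1) {θ : ℝ} (hθ0 : 0 < θ)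
    (hθ : θ ≤ 1 / 48) {y z : ℝ} (hy1 : -Real.pi ≤ y) (hy2 : y ≤ Real.pi) (hns : NS α y z)
    {c : ℤ} (hc1 : -(3 / 8) < q * ((z - α * y) / (2 * Real.pi)) - c)
    (hc2 : q * ((z - α * y) / (2 * Real.pi)) - c < -(1 / 8)) :
    ∃ N : ℕ, q ≤ N ∧ ∑ n ∈ Finset.range N, (1 - Real.cos (z + α * sN α θ y z n))
      ≤ N * (500000000 / q) := by
  have hpi := Real.pi_pos
  have hpi2 := Real.pi_lt_d2
  have hq : (3 : ℝ) ≤ q := by exact_mod_cast hq3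
  have hq0 : (0 : ℝ) < q := by linarith
  obtain ⟨k, hk1, hk2, m, hm⟩ := kstar hq3 hco hη hα hηq hc1 hc2
  set t := (z - α * y) / (2 * Real.pi) with ht
  have hzt : z = 2 * Real.pi * t + α * y := by rw [ht]; field_simp; ring
  set X := q * η with hX
  have hX0 : 0 < X := by positivity
  have hXq : X * (q : ℝ) ^ 4 ≤ 1 := by
    have : q * η * (q : ℝ) ^ 4 = η * (q : ℝ) ^ 5 := by ring
    rw [hX, this]; exact hηq
  have hX81 : X * 81 ≤ 1 := by
    have : (3 : ℝ) ^ 4 ≤ (q : ℝ) ^ 4 := pow_le_pow_left₀ (by norm_num) hq 4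
    norm_num at this
    nlinarith
  have hk1' : (1 : ℝ) ≤ k := by exact_mod_cast hk1
  set δ := 2 * Real.pi * X with hδ
  have hδ0 : 0 < δ := by positivity
  set R := 2 * Real.pi * k - y with hR
  have hR0 : 0 ≤ R := by rw [hR]; nlinarith
  set S := R + δ with hS
  set T := Tt α y z S with hT
  have hTge : δ / (81 * δ ^ 4) ≤ T := by
    have g := Tt_gap' hns (s := R) (s' := S) (K := 81 * δ ^ 4) (by positivity) (by linarith) (by
      intro r hr
      have d1 : |y + r - 2 * Real.pi * (k : ℤ)| ≤ δ := by
        rw [abs_le]; push_cast; constructor <;> linarith [hr.1, hr.2]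
      refine HH_near (k := k) (m := m) d1 ?_
      have e : z + α * r - 2 * Real.pi * m = 2 * Real.pi * (t + k * α - m) +
          α * (y + r - 2 * Real.pi * (k : ℤ)) := by rw [hzt]; push_cast; ring
      rw [e]
      refine (abs_add_le _ _).trans ?_
      rw [abs_mul (2 * Real.pi), abs_mul α, abs_of_pos h0, abs_of_pos (by positivity : 0 < 2 * Real.pi)]
      have f1 : 2 * Real.pi * |t + k * α - m| ≤ δ := mul_le_mul_of_nonneg_left hm (by positivity)
      have f2 : α * |y + r - 2 * Real.pi * (k : ℤ)| ≤ 1 * δ :=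
        mul_le_mul h1.le d1 (abs_nonneg _) zero_le_one
      linarith)
    have g2 := Tt_gap hns hR0
    rw [Tt_zero] at g2
    have e : S - R = δ := by rw [hS]; ring
    rw [e] at g
    have : (R - 0) / 16 ≥ 0 := by positivity
    linarith
  have hT1 : 1 ≤ T * (21000 * X ^ 3) := by
    rw [div_le_iff₀ (by positivity)] at hTge
    have f : 1 ≤ T * (81 * δ ^ 3) := by
      have : 1 * δ ≤ (T * (81 * δ ^ 3)) * δ := by linarith [(by ring : T * (81 * δ ^ 4) = (T * (81 * δ ^ 3)) * δ)]
      exact le_of_mul_le_mul_right this hδ0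
    have hT0 : 0 ≤ T := by
      by_contra hcon
      push Not at hcon
      have : T * (81 * δ ^ 3) ≤ 0 := mul_nonpos_of_nonpos_of_nonneg hcon.le (by positivity)
      linarith
    refine f.trans (mul_le_mul_of_nonneg_left ?_ hT0)
    have g : δ ≤ 6.3 * X := by rw [hδ]; nlinarith
    have g3 : δ ^ 3 ≤ (6.3 * X) ^ 3 := pow_le_pow_left₀ hδ0.le g 3
    have : (6.3 * X) ^ 3 = 250.047 * X ^ 3 := by ring
    have : 0 < X ^ 3 := by positivity
    linarith
  have hSX : S * X ≤ 4 := by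
    have e : S * X = 2 * Real.pi * (k * X) - y * X + 2 * Real.pi * X ^ 2 := by
      rw [hS, hR, hδ]; ring
    have f1 : 2 * Real.pi * (k * X) ≤ 2 * Real.pi * (1 / 2) :=
      mul_le_mul_of_nonneg_left hk2 (by positivity)
    have f2 : -y * X ≤ Real.pi * X := mul_le_mul_of_nonneg_right (by linarith) hX0.le
    have f3 : X ^ 2 ≤ X := by nlinarith
    have f4 : 2 * Real.pi * X ^ 2 ≤ 2 * Real.pi * X := mul_le_mul_of_nonneg_left f3 (by positivity)
    have f5 : Real.pi * X ≤ 3.15 * X := mul_le_mul_of_nonneg_right hpi2.le hX0.le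
    nlinarith
  obtain ⟨n1, n2⟩ := numeric hq hX0 hXq hSX hT1
  have hTpos : 0 < T := by linarith
  set N := ⌊T / θ⌋₊ with hN
  have N1 : (N : ℝ) * θ ≤ T := by
    rw [← le_div_iff₀ hθ0]; exact Nat.floor_le (by positivity)
  have N2 : T < (N + 1) * θ := by
    rw [← div_lt_iff₀ hθ0]; exact Nat.lt_floor_add_one _
  have N3 : (q : ℝ) ≤ N := by
    have : ((N : ℝ) + 1) * θ ≤ (N + 1) * (1 / 48) := mul_le_mul_of_nonneg_left hθ (by positivity)
    linarith
  refine ⟨N, by exact_mod_cast N3, ?_⟩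
  have hsN : sN α θ y z N ≤ S := by
    rw [← (Tt_strictMono hns).le_iff_le,
      Tt_sN h0 h1 hns (by rw [abs_of_pos hθ0]; exact hθ)]
    exact N1
  have hpt : ∀ n ∈ Finset.range N, 1 - Real.cos (z + α * sN α θ y z n) ≤
      1 / q + 512 * (q : ℝ) ^ 4 * HH (y + sN α θ y z n) (z + α * sN α θ y z n) := by
    intro n hn
    have hnN : n ≤ N := (Finset.mem_range.1 hn).le
    have r1 := sN_nonneg h0 h1 hθ0.le hθ y z n
    have r2 := (sN_mono h0 h1 hθ0.le hθ y z hnN).trans hsN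
    set r := sN α θ y z n with hr
    set kn := round ((y + r) / (2 * Real.pi)) with hkn
    have kn0 : 0 ≤ kn := by
      rw [hkn, round_eq]
      apply Int.floor_nonneg.2
      have : (y + r) / (2 * Real.pi) + 1 / 2 = (y + r + Real.pi) / (2 * Real.pi) := by
        field_simp
      rw [this]
      apply div_nonneg <;> linarith
    have kn1 : kn ≤ k := by
      rw [hkn, round_eq]
      apply Int.lt_add_one_iff.1
      rw [Int.floor_lt]
      push_cast
      have : (y + r) / (2 * Real.pi) ≤ k + X := by
        rw [div_le_iff₀ (by positivity)]
        rw [hS, hR, hδ] at r2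
        linarith
      linarith
    have kn1' : (kn : ℝ) ≤ k := by exact_mod_cast kn1
    refine pointwise h0 h1 hodd hη hα (t := t) (c := c) (k := kn) ?_ hc1 hc2 kn0 ?_ ?_
    · rw [hzt]; ring
    · exact (mul_le_mul_of_nonneg_right kn1' hX0.le).trans hk2
    · have := abs_sub_round ((y + r) / (2 * Real.pi))
      rw [← hkn] at this
      have e : y + r - 2 * Real.pi * kn = 2 * Real.pi * ((y + r) / (2 * Real.pi) - kn) := by
        field_simp
      rw [e, abs_mul, abs_of_pos (by positivity : 0 < 2 * Real.pi)]
      nlinarith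
  refine (Finset.sum_le_sum hpt).trans ?_
  rw [Finset.sum_add_distrib, ← Finset.mul_sum, Finset.sum_const, Finset.card_range, nsmul_eq_mul]
  have hsum := sN_sum h0 h1 hθ0.le hθ y z N
  rw [← Finset.mul_sum] at hsum
  set G := ∑ n ∈ Finset.range N, HH (y + sN α θ y z n) (z + α * sN α θ y z n) with hG
  have hN1 : (1 : ℝ) ≤ N := by linarith
  have hTN : T ≤ 2 * N * θ := by nlinarith
  have hG0 : 0 ≤ G := Finset.sum_nonneg fun n _ => HH_nonneg _ _
  have hGT : G * T ≤ 4 * N * S := by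
    calc G * T ≤ G * (2 * N * θ) := mul_le_mul_of_nonneg_left hTN hG0
      _ = 2 * N * (θ * G) := by ring
      _ ≤ 2 * N * (2 * S) := mul_le_mul_of_nonneg_left (by linarith) (by positivity)
      _ = _ := by ring
  have hfin : 512 * (q : ℝ) ^ 4 * G ≤ N * (400000000 / q) := by
    have : (512 * (q : ℝ) ^ 4 * G) * (q * T) ≤ (N * (400000000 / q)) * (q * T) := by
      calc (512 * (q : ℝ) ^ 4 * G) * (q * T) = 512 * (q : ℝ) ^ 5 * (G * T) := by ring
        _ ≤ 512 * (q : ℝ) ^ 5 * (4 * N * S) := mul_le_mul_of_nonneg_left hGT (by positivity)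
        _ = N * (2048 * (q : ℝ) ^ 5 * S) := by ring
        _ ≤ N * (400000000 * T) := mul_le_mul_of_nonneg_left n2 (by positivity)
        _ = _ := by field_simp
    exact le_of_mul_le_mul_right this (by positivity)
  have e : (N : ℝ) * (500000000 / q) = N * (1 / q) + N * (400000000 / q) + N * (99999999 / q) := by
    field_simp; norm_num
  have : 0 ≤ (N : ℝ) * (99999999 / q) := by positivity
  linarith

lemma HH_pi (y z : ℝ) : HH y (z + Real.pi) = HH y z := by
  unfold HH
  rw [mul_add, Real.cos_add_two_pi]

lemma tau_pi {α : ℝ} (h0 : 0 < α) (h1 : α < 1) {θ : ℝ} (hθ : |θ| ≤ 1 / 48) (y z : ℝ) :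
    tau α θ (Circle.exp y) (Circle.exp (z + Real.pi)) = tau α θ (Circle.exp y) (Circle.exp z) := by
  obtain ⟨σ, hσ0, hσ1, hσ⟩ := sol_curve h0 h1 hθ y z
  rw [← hσ1]
  refine (tau_unique h0 h1 hθ y (z + Real.pi) σ hσ0 (fun t ht => ?_)).symm
  have := hσ t ht
  rwa [← HH_pi, show z + α * σ t + Real.pi = z + Real.pi + α * σ t by ring] at this

lemma sN_pi {α : ℝ} (h0 : 0 < α) (h1 : α < 1) {θ : ℝ} (hθ : |θ| ≤ 1 / 48) (y z : ℝ) (n : ℕ) :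
    sN α θ y (z + Real.pi) n = sN α θ y z n := by
  induction n with
  | zero => rfl
  | succ n ih =>
    rw [sN, sN, ih, show z + Real.pi + α * sN α θ y z n = z + α * sN α θ y z n + Real.pi by ring,
      tau_pi h0 h1 hθ]

lemma NS_pi {α y z : ℝ} (h : NS α y z) : NS α y (z + Real.pi) := by
  intro s
  rw [show z + Real.pi + α * s = z + α * s + Real.pi by ring, HH_pi]
  exact h s

lemma NS_shift {α y z : ℝ} (h : NS α y z) (k : ℤ) : NS α (y - 2 * Real.pi * k) z := by
  intro s
  have := h s
  unfold HH at *
  rwa [show y - 2 * Real.pi * k + s = y + s - k * (2 * Real.pi) by ring,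
    Real.cos_sub_int_mul_two_pi]

lemma ae_good {α : ℝ} {q : ℕ → ℕ} (hq : Tendsto (fun n => (q n : ℝ)) atTop atTop) (d : ℝ) :
    ∀ᵐ w : ℝ × ℝ × ℝ, ∀ k : ℤ, ∀ n : ℕ, ∃ j, n ≤ j ∧ ∃ c : ℤ,
      (q j : ℝ) / (2 * Real.pi) * (w.2.2 - α * w.2.1 + (2 * Real.pi * k * α + d)) - c
        ∈ Set.Ioo (-(3 / 8) : ℝ) (-(1 / 8)) := by
  rw [ae_all_iff]
  intro k
  have hl : Tendsto (fun n => (q n : ℝ) / (2 * Real.pi)) atTop atTop :=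
    hq.atTop_div_const (by positivity)
  have := metric_lemma _ hl (a := -(3 / 8)) (b := -(1 / 8)) (by norm_num)
  have h2 := (measurePreserving_add_right (volume : Measure ℝ)
    (2 * Real.pi * k * α + d)).quasiMeasurePreserving.ae this
  exact ae_zeta α h2

/-- orbit averages of the real part of the last coordinate get close to ±1 -/
lemma avg_one {v α : ℝ} (h0 : 0 < α) (h1 : α < 1) {q : ℕ → ℕ} {a : ℕ → ℤ} {η : ℕ → ℝ}
    (hq : Tendsto (fun n => (q n : ℝ)) atTop atTop)
    (hd : ∀ n, Odd (q n) ∧ 1 ≤ q n ∧ IsCoprime (a n) (q n : ℤ) ∧ 0 < η n ∧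
      α = a n / q n + η n ∧ η n * (q n : ℝ) ^ 5 ≤ 1)
    {θ : ℝ} (hθ0 : 0 < θ) (hθ : θ ≤ 1 / 48) {x y z d : ℝ} (hns : NS α y z)
    (hdd : d = 0 ∨ d = Real.pi)
    (hg : ∀ k : ℤ, ∀ n : ℕ, ∃ j, n ≤ j ∧ ∃ c : ℤ,
      (q j : ℝ) / (2 * Real.pi) * (z - α * y + (2 * Real.pi * k * α + d)) - c
        ∈ Set.Ioo (-(3 / 8) : ℝ) (-(1 / 8))) (K : ℕ) :
    ∃ N, K ≤ N ∧ 0 < N ∧ ∑ n ∈ Finset.range N,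
      (1 - Real.cos d * (((fT v α θ)^[n] (EE (x, y, z))).2.2 : ℂ).re) ≤ N * (1 / (K + 1)) := by
  have hpi := Real.pi_pos
  have hθa : |θ| ≤ 1 / 48 := by rwa [abs_of_pos hθ0]
  set k : ℤ := ⌊(y + Real.pi) / (2 * Real.pi)⌋ with hk
  set y' := y - 2 * Real.pi * k with hy'
  have hk1 : (k : ℝ) * (2 * Real.pi) ≤ y + Real.pi := by
    rw [← le_div_iff₀ (by positivity)]; exact Int.floor_le _
  have hk2 : y + Real.pi < (k + 1) * (2 * Real.pi) := by
    rw [← div_lt_iff₀ (by positivity)]; exact Int.lt_floor_add_one _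
  obtain ⟨j0, hj0⟩ := eventually_atTop.1
    (hq.eventually_ge_atTop (max 3 (max (K : ℝ) (500000000 * (K + 1)))))
  obtain ⟨j, hj, c, hc1, hc2⟩ := hg k j0
  have hqj := hj0 j hj
  have hq3 : (3 : ℝ) ≤ q j := (le_max_left _ _).trans hqj
  have hqK : (K : ℝ) ≤ q j := ((le_max_left _ _).trans (le_max_right _ _)).trans hqj
  have hqB : 500000000 * ((K : ℝ) + 1) ≤ q j :=
    ((le_max_right _ _).trans (le_max_right _ _)).trans hqj
  obtain ⟨hodd, -, hco, hη, hα, hηq⟩ := hd j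
  have hns' : NS α y' (z + d) := by
    rcases hdd with rfl | rfl
    · rw [add_zero]; exact NS_shift hns k
    · exact NS_pi (NS_shift hns k)
  have hs : ∀ n, sN α θ y' (z + d) n = sN α θ y' z n := by
    rcases hdd with rfl | rfl
    · intro n; rw [add_zero]
    · exact sN_pi h0 h1 hθa y' z
  have e : (q j : ℝ) * ((z + d - α * y') / (2 * Real.pi)) =
      (q j : ℝ) / (2 * Real.pi) * (z - α * y + (2 * Real.pi * k * α + d)) := by
    rw [hy']; ring
  obtain ⟨N, hN, hsum⟩ := core h0 h1 hodd (by exact_mod_cast hq3) hco hη hα hηq hθ0 hθ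
    (y := y') (z := z + d) (by rw [hy']; linarith) (by rw [hy']; linarith) hns' (c := c)
    (by rw [e]; exact hc1) (by rw [e]; exact hc2)
  have hq3' : 3 ≤ q j := by exact_mod_cast hq3
  have hqK' : K ≤ q j := by exact_mod_cast hqK
  refine ⟨N, hqK'.trans hN, by omega, ?_⟩
  have hEE : EE (x, y, z) = EE (x, y', z) := by
    simp only [EE, hy', exp_sub_int]
  have hsin : Real.sin d = 0 := by rcases hdd with rfl | rfl <;> simp
  have e2 : ∀ n, (1 - Real.cos d * (((fT v α θ)^[n] (EE (x, y, z))).2.2 : ℂ).re) =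
      1 - Real.cos (z + d + α * sN α θ y' (z + d) n) := by
    intro n
    rw [hEE, orbit_eq, hs, show z + d + α * sN α θ y' z n = (z + α * sN α θ y' z n) + d by ring,
      Real.cos_add _ d, hsin]
    simp only [EE, Circle.coe_exp, Complex.exp_ofReal_mul_I_re]
    ring
  rw [Finset.sum_congr rfl (fun n _ => e2 n)]
  refine hsum.trans (mul_le_mul_of_nonneg_left ?_ (Nat.cast_nonneg _))
  rw [div_le_div_iff₀ (by linarith) (by positivity)]
  linarith

def phiC : BoundedContinuousFunction T3 ℝ :=
  BoundedContinuousFunction.mkOfCompact ⟨fun p => (p.2.2 : ℂ).re, by fun_prop⟩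

lemma phiC_apply (p : T3) : phiC p = (p.2.2 : ℂ).re := rfl

lemma emp_int (f : T3 → T3) (x : T3) {n : ℕ} (hn : 0 < n) :
    ∫ p, phiC p ∂(empT3 f x n : Measure T3) =
      (n : ℝ)⁻¹ * ∑ i ∈ Finset.range n, ((f^[i] x).2.2 : ℂ).re := by
  have : (empT3 f x n : Measure T3) = empMeasT3 f x n := by
    simp [empT3, hn.ne']
  rw [this, empMeasT3, integral_smul_measure, integral_finsetSum_measure]
  · simp only [smul_eq_mul]
    congr 1
    · simp
    · refine Finset.sum_congr rfl fun i _ => ?_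
      rw [integral_dirac]; rfl
  · intro i _
    exact phiC.integrable _

lemma no_conv (f : T3 → T3) (x : T3)
    (hQ : ∀ d : ℝ, (d = 0 ∨ d = Real.pi) → ∀ K : ℕ, ∃ N, K ≤ N ∧ 0 < N ∧ ∑ n ∈ Finset.range N,
      (1 - Real.cos d * ((f^[n] x).2.2 : ℂ).re) ≤ N * (1 / (K + 1))) :
    ¬ ∃ μ : ProbabilityMeasure T3, Tendsto (fun n : ℕ => empT3 f x n) atTop (𝓝 μ) := by
  rintro ⟨μ, h⟩
  have ht := (ProbabilityMeasure.tendsto_iff_forall_integral_tendsto.1 h) phiC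
  set L := ∫ p, phiC p ∂(μ : Measure T3)
  have key : ∀ d : ℝ, (d = 0 ∨ d = Real.pi) → 1 / 2 ≤ Real.cos d * L := by
    intro d hd
    have ht' := ht.const_mul (Real.cos d)
    by_contra! hlt
    obtain ⟨n0, hn0⟩ := eventually_atTop.1 (ht'.eventually_lt_const hlt)
    obtain ⟨N, hN, hN0, hs⟩ := hQ d hd (n0 + 1)
    have h3 := hn0 N (by omega)
    rw [emp_int f x hN0] at h3
    have hNp : (0 : ℝ) < N := by exact_mod_cast hN0
    rw [Finset.sum_sub_distrib, ← Finset.mul_sum] at hs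
    simp only [Finset.sum_const, Finset.card_range, nsmul_eq_mul, mul_one] at hs
    set S := ∑ i ∈ Finset.range N, ((f^[i] x).2.2 : ℂ).re
    have h4 : (1 : ℝ) / (((n0 + 1 : ℕ) : ℝ) + 1) ≤ 1 / 2 := by
      apply one_div_le_one_div_of_le (by norm_num)
      push_cast
      have : (0 : ℝ) ≤ n0 := Nat.cast_nonneg _
      linarith
    have h5 : (N : ℝ) - Real.cos d * S ≤ N * (1 / 2) :=
      hs.trans (mul_le_mul_of_nonneg_left h4 hNp.le)
    rw [show Real.cos d * ((N : ℝ)⁻¹ * S) = (Real.cos d * S) / N by ring,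
      div_lt_iff₀ hNp] at h3
    linarith
  have k1 := key 0 (Or.inl rfl)
  have k2 := key Real.pi (Or.inr rfl)
  rw [Real.cos_zero] at k1
  rw [Real.cos_pi] at k2
  linarith

lemma meas_Q {f : T3 → T3} (hf : Continuous f) (d : ℝ) :
    MeasurableSet {x : T3 | ∀ K : ℕ, ∃ N, K ≤ N ∧ 0 < N ∧ ∑ n ∈ Finset.range N,
      (1 - Real.cos d * ((f^[n] x).2.2 : ℂ).re) ≤ N * (1 / (K + 1))} := by
  have : {x : T3 | ∀ K : ℕ, ∃ N, K ≤ N ∧ 0 < N ∧ ∑ n ∈ Finset.range N,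
      (1 - Real.cos d * ((f^[n] x).2.2 : ℂ).re) ≤ N * (1 / (K + 1))} =
      ⋂ K : ℕ, ⋃ N : ℕ, ⋃ _ : K ≤ N ∧ 0 < N, {x : T3 | ∑ n ∈ Finset.range N,
      (1 - Real.cos d * ((f^[n] x).2.2 : ℂ).re) ≤ N * (1 / (K + 1))} := by
    ext x; simp [and_assoc]
  rw [this]
  refine MeasurableSet.iInter fun K => MeasurableSet.iUnion fun N => MeasurableSet.iUnion fun _ => ?_
  refine IsClosed.measurableSet (isClosed_le ?_ continuous_const)
  refine continuous_finsetSum _ fun n _ => ?_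
  have := hf.iterate n
  fun_prop

lemma meas_D {f : T3 → T3} (hf : Continuous f) :
    MeasurableSet {x : T3 | ∀ U ∈ TopologicalSpace.countableBasis T3, ∃ n, f^[n] x ∈ U} := by
  have : {x : T3 | ∀ U ∈ TopologicalSpace.countableBasis T3, ∃ n, f^[n] x ∈ U} =
      ⋂ U ∈ TopologicalSpace.countableBasis T3, ⋃ n : ℕ, (f^[n]) ⁻¹' U := by
    ext x; simp
  rw [this]
  refine MeasurableSet.biInter (TopologicalSpace.countable_countableBasis T3) fun U hU => ?_
  refine MeasurableSet.iUnion fun n => ?_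
  exact ((TopologicalSpace.isOpen_of_mem_countableBasis hU).preimage (hf.iterate n)).measurableSet

lemma dense_of {f : T3 → T3} {x : T3}
    (h : ∀ U ∈ TopologicalSpace.countableBasis T3, ∃ n, f^[n] x ∈ U) :
    Dense (Set.range fun n : ℕ => f^[n] x) := by
  rw [(TopologicalSpace.isBasis_countableBasis T3).dense_iff]
  intro U hU _
  obtain ⟨n, hn⟩ := h U hU
  exact ⟨_, hn, n, rfl⟩

/-- There exists a `C^∞` diffeomorphism `f` of the 3-torus such that
Lebesgue (Haar) almost every point `x` has a dense forward orbit and a non-convergent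
sequence of empirical measures (in the weak topology on Borel probability measures).
In particular `f` is transitive and has no physical measure. -/
theorem exists_smooth_diffeo_torus3_historical :
    ∃ f : Diffeomorph modelT3 modelT3 T3 T3 (⊤ : ℕ∞),
      (∀ᵐ x ∂LebT3,
        Dense (Set.range fun n : ℕ => (⇑f)^[n] x) ∧
        ¬ ∃ μ : ProbabilityMeasure T3,
            Tendsto (fun n : ℕ => empT3 (⇑f) x n) atTop (𝓝 μ)) ∧
      (∃ x : T3, Dense (Set.range fun n : ℕ => (⇑f)^[n] x)) ∧
      ¬ ∃ μ : ProbabilityMeasure T3,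
          Measure.map (⇑f) (μ : Measure T3) = (μ : Measure T3) ∧
          0 < LebT3 {x : T3 | Tendsto (fun n : ℕ => empT3 (⇑f) x n) atTop (𝓝 μ)} := by
  obtain ⟨α, q, a, η, h0, h1, hq, hd⟩ := exists_slope
  obtain ⟨v, hv⟩ := leaf_dense hq hd
  obtain ⟨μ, hμ⟩ := good_mu h0 h1 hv
  have hcont : Continuous (fT v α (thet μ)) := by
    rw [← fD_coe v h0 h1 (thet_abs μ)]
    exact (fD v h0 h1 (thet_abs μ)).continuous
  have hQ : ∀ d : ℝ, (d = 0 ∨ d = Real.pi) → ∀ᵐ x ∂LebT3, ∀ K : ℕ, ∃ N, K ≤ N ∧ 0 < N ∧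
      ∑ n ∈ Finset.range N,
      (1 - Real.cos d * (((fT v α (thet μ))^[n] x).2.2 : ℂ).re) ≤ N * (1 / (K + 1)) := by
    intro d hdd
    refine transfer (meas_Q hcont d) ?_
    filter_upwards [ae_NS α, ae_good (α := α) hq d] with w hw1 hw2
    intro K
    exact avg_one h0 h1 hq hd (thet_pos μ) (thet_lt μ).le hw1 hdd hw2 K
  have hmain : ∀ᵐ x ∂LebT3,
        Dense (Set.range fun n : ℕ => (fT v α (thet μ))^[n] x) ∧
        ¬ ∃ μ' : ProbabilityMeasure T3,
            Tendsto (fun n : ℕ => empT3 (fT v α (thet μ)) x n) atTop (𝓝 μ') := by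
    filter_upwards [transfer (meas_D hcont) hμ, hQ 0 (Or.inl rfl), hQ Real.pi (Or.inr rfl)]
      with x hx1 hx2 hx3
    refine ⟨dense_of hx1, no_conv _ _ ?_⟩
    rintro d (rfl | rfl)
    · exact hx2
    · exact hx3
  refine ⟨fD v h0 h1 (thet_abs μ), ?_⟩
  rw [fD_coe]
  refine ⟨hmain, ?_, ?_⟩
  · obtain ⟨x, hx⟩ := hmain.exists
    exact ⟨x, hx.1⟩
  · rintro ⟨ν, -, hpos⟩
    refine hpos.ne' (measure_mono_null ?_ (ae_iff.1 hmain))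
    intro x hx hx2
    exact hx2.2 ⟨ν, hx⟩

end
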